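/- (Theorem 2: local Hölder stability for the inverse zeroth-order coefficient problem.) Fix H ∈ 𝓗 and a ∈ C¹(closure(Ω)) with a(x) ≠ 0 for every x ∈ closure(Ω), and let 𝓟 := {p : Ω → ℝ measurable with |p(x)| ≤ M for a.e. x}. Then there exists a graph-type subdomain D with D ⊂ Ω and 0 ∈ ∂D ∩ ∂Ω (independent of M₀, p₁, p₂ below), and for every M₀ > 0 there exist constants C > 0 and θ ∈ (0,1), such that the following holds: whenever p₁, p₂ ∈ 𝓟 and, for j = 1,2, u_j : closure(Ω) × [0,T] → ℝ are functions such that u_j and ∂_t u_j are C¹ on closure(Ω) × [0,T], u_j satisfies ∂_t u_j + ⟨H(x), ∇_x u_j⟩ + p_j(x) u_j = 0 on Ω × (0,T) and u_j(x,0) = a(x) on Ω, and ∫₀^T (sup_{x∈D} |∂_t u_j(x,t)|)² dt ≤ M₀², one has (∫_D |p₁(x) − p₂(x)|² dx)^{1/2} ≤ C ( ‖∂_t u₁ − ∂_t u₂‖_{L²(Γ×(0,T))}^θ + ‖∂_t u₁ − ∂_t u₂‖_{L²(Γ×(0,T))} ). -/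

import Mathlib

noncomputable section

open MeasureTheory Metric Set
open scoped RealInnerProductSpace

abbrev Esp (n : ℕ) : Type := EuclideanSpace ℝ (Fin n)

/-- The point `(x', xₙ) ∈ ℝ^{d+1} = ℝ^d × ℝ`. -/
noncomputable def graphMk (d : ℕ) (x' : Esp d) (xn : ℝ) : Esp (d+1) :=
  (EuclideanSpace.equiv (Fin (d+1)) ℝ).symm
    (Fin.snoc (⇑(EuclideanSpace.equiv (Fin d) ℝ) x') xn)

/-- `H` is `(M, δ₀)`-admissible on the compact set `K`. -/
def IsAdmissible {n : ℕ} (M δ₀ : ℝ) (K : Set (Esp n)) (H : Esp n → Esp n) : Prop :=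
  ∃ U : Set (Esp n), IsOpen U ∧ Convex ℝ U ∧ K ⊆ U ∧ ContDiffOn ℝ 1 H U ∧
    (∀ x ∈ U, ‖H x‖ ≤ M) ∧ (∀ x ∈ U, ‖fderiv ℝ H x‖ ≤ M) ∧ (∀ x ∈ K, δ₀ < ‖H x‖)

/-- `ψ_H(x) = ⟨x, H(x)⟩`. -/
noncomputable def psiW {n : ℕ} (H : Esp n → Esp n) (x : Esp n) : ℝ := ⟪x, H x⟫

/-- The Carleman weight `φ_H(x,t) = -βt + ψ_H(x)`. -/
noncomputable def phiW {n : ℕ} (β : ℝ) (H : Esp n → Esp n) (x : Esp n) (t : ℝ) : ℝ :=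
  -(β * t) + psiW H x

/-- Outward unit normal `ν₁` of the upper graph `xₙ = ℓ(x')`. -/
noncomputable def nuUp (d : ℕ) (ℓ : Esp d → ℝ) (x' : Esp d) : Esp (d+1) :=
  (Real.sqrt (1 + ‖gradient ℓ x'‖ ^ 2))⁻¹ • graphMk d (-(gradient ℓ x')) 1

/-- Outward unit normal `ν₂` of the lower graph `xₙ = m(x')`. -/
noncomputable def nuDown (d : ℕ) (m : Esp d → ℝ) (x' : Esp d) : Esp (d+1) :=
  (Real.sqrt (1 + ‖gradient m x'‖ ^ 2))⁻¹ • graphMk d (gradient m x') (-1)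

/-- Area element `ω(x') = √(1 + |∇m(x')|²)` of the graph of `m`. -/
noncomputable def omegaW (d : ℕ) (m : Esp d → ℝ) (x' : Esp d) : ℝ :=
  Real.sqrt (1 + ‖gradient m x'‖ ^ 2)

/-- The graph domain `D = {(x', xₙ) : |x'| < ρ₁, ℓ(x') − ℓ̃(x') < xₙ < ℓ(x')}`. -/
def graphDomain (d : ℕ) (ρ₁ : ℝ) (ℓ ℓt : Esp d → ℝ) : Set (Esp (d+1)) :=
  {x | ∃ x' : Esp d, ∃ xn : ℝ, ‖x'‖ < ρ₁ ∧ ℓ x' - ℓt x' < xn ∧ xn < ℓ x' ∧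
    x = graphMk d x' xn}


/-- The divergence of a vector field on Euclidean space. -/
def divergence {m : ℕ} (H : Esp m → Esp m) (x : Esp m) : ℝ :=
  ∑ i, fderiv ℝ H x (EuclideanSpace.single i 1) i

lemma abs_divergence_le {m : ℕ} {H : Esp m → Esp m} {x : Esp m} {M : ℝ}
    (h : ‖fderiv ℝ H x‖ ≤ M) : |divergence H x| ≤ m * M := by
  refine (Finset.abs_sum_le_sum_abs _ _).trans ?_
  have key : ∀ i ∈ Finset.univ, |fderiv ℝ H x (EuclideanSpace.single i 1) i| ≤ M := by
    intro i _
    calc |fderiv ℝ H x (EuclideanSpace.single i 1) i|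
        ≤ ‖fderiv ℝ H x (EuclideanSpace.single i 1)‖ := by
          simpa using PiLp.norm_apply_le (fderiv ℝ H x (EuclideanSpace.single i 1)) i
      _ ≤ ‖fderiv ℝ H x‖ * ‖EuclideanSpace.single i (1 : ℝ)‖ :=
          ContinuousLinearMap.le_opNorm _ _
      _ ≤ M := by simpa using h
  refine (Finset.sum_le_sum key).trans (by simp)

lemma continuousOn_divergence {m : ℕ} {H : Esp m → Esp m} {U : Set (Esp m)} (hU : IsOpen U)
    (hH : ContDiffOn ℝ 1 H U) : ContinuousOn (divergence H) U := by
  have h := hH.continuousOn_fderiv_of_isOpen hU le_rfl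
  refine continuousOn_finsetSum _ fun i _ => ?_
  have h2 : ContinuousOn (fun x => fderiv ℝ H x (EuclideanSpace.single i 1)) U :=
    h.clm_apply continuousOn_const
  exact (EuclideanSpace.proj (𝕜 := ℝ) i).continuous.comp_continuousOn h2

/-- A function which vanishes off a compact set, is continuous on it, is integrable. -/
lemma integrable_of_eq_zero_off_compact {X : Type*} [TopologicalSpace X] [MeasurableSpace X]
    [OpensMeasurableSpace X] [T2Space X] {μ : Measure X} [IsFiniteMeasureOnCompacts μ]
    {g : X → ℝ} {K : Set X} (hK : IsCompact K) (hg : ContinuousOn g K)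
    (h0 : ∀ x, x ∉ K → g x = 0) : Integrable g μ := by
  have h1 : IntegrableOn g K μ := hg.integrableOn_compact' hK hK.measurableSet
  exact (integrableOn_iff_integrable_of_support_subset fun x hx => by
    by_contra hxK; exact hx (h0 x hxK)).1 h1

lemma integral_fderiv_apply_add_mul_divergence {m : ℕ} {g : Esp m → ℝ} {H : Esp m → Esp m}
    {U : Set (Esp m)} (hU : IsOpen U) (hg : ContDiff ℝ 1 g) (hgc : HasCompactSupport g)
    (hsub : tsupport g ⊆ U) (hH : ContDiffOn ℝ 1 H U) :
    ∫ x, (fderiv ℝ g x (H x) + g x * divergence H x) = 0 := by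
  classical
  have hcH := hH.continuousOn.mono hsub
  have hdH := (hH.continuousOn_fderiv_of_isOpen hU le_rfl).mono hsub
  have hdg : Continuous (fderiv ℝ g) := hg.continuous_fderiv one_ne_zero
  have hcoord : ∀ i : Fin m, ContinuousOn (fun x => H x i) (tsupport g) := fun i =>
    (EuclideanSpace.proj (𝕜 := ℝ) i).continuous.comp_continuousOn hcH
  have hder : ∀ i : Fin m, ContinuousOn
      (fun x => fderiv ℝ H x (EuclideanSpace.single i 1) i) (tsupport g) := fun i =>
    (EuclideanSpace.proj (𝕜 := ℝ) i).continuous.comp_continuousOn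
      (hdH.clm_apply continuousOn_const)
  have hdg0 : ∀ x, x ∉ tsupport g → fderiv ℝ g x = 0 := fun x hx => by
    by_contra h
    exact hx (support_fderiv_subset ℝ h)
  have I1 : ∀ i : Fin m, Integrable
      (fun x => H x i * fderiv ℝ g x (EuclideanSpace.single i 1)) := fun i =>
    integrable_of_eq_zero_off_compact hgc
      ((hcoord i).mul (hdg.continuousOn.clm_apply continuousOn_const))
      fun x hx => by simp [hdg0 x hx]
  have I2 : ∀ i : Fin m, Integrable
      (fun x => fderiv ℝ H x (EuclideanSpace.single i 1) i * g x) := fun i =>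
    integrable_of_eq_zero_off_compact hgc ((hder i).mul hg.continuous.continuousOn)
      fun x hx => by simp [image_eq_zero_of_notMem_tsupport hx]
  have I3 : ∀ i : Fin m, Integrable (fun x => H x i * g x) := fun i =>
    integrable_of_eq_zero_off_compact hgc ((hcoord i).mul hg.continuous.continuousOn)
      fun x hx => by simp [image_eq_zero_of_notMem_tsupport hx]
  have key : ∀ i : Fin m, ∫ x, H x i * fderiv ℝ g x (EuclideanSpace.single i 1)
      = - ∫ x, fderiv ℝ H x (EuclideanSpace.single i 1) i * g x := by
    intro i
    have := integral_bilinear_hasLineDerivAt_right_eq_neg_left_of_integrable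
      (μ := (volume : Measure (Esp m))) (f := fun x => H x i)
      (f' := fun x => fderiv ℝ H x (EuclideanSpace.single i 1) i) (g := g)
      (g' := fun x => fderiv ℝ g x (EuclideanSpace.single i 1))
      (v := EuclideanSpace.single i 1)
      (B := ContinuousLinearMap.mul ℝ ℝ) (I2 i) (I1 i) (I3 i)
      (fun x hx => by
        have h1 : HasFDerivAt H (fderiv ℝ H x) x :=
          ((hH.differentiableOn one_ne_zero).differentiableAt
            (hU.mem_nhds (hsub hx))).hasFDerivAt
        exact ((EuclideanSpace.proj (𝕜 := ℝ) i).hasFDerivAt.comp x h1).hasLineDerivAt _)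
      (fun x _ => ((hg.differentiable one_ne_zero) x).hasFDerivAt.hasLineDerivAt _)
    exact this
  have hexp : ∀ x, fderiv ℝ g x (H x) + g x * divergence H x
      = ∑ i, (H x i * fderiv ℝ g x (EuclideanSpace.single i 1)
        + fderiv ℝ H x (EuclideanSpace.single i 1) i * g x) := by
    intro x
    rw [Finset.sum_add_distrib, ← Finset.sum_mul, mul_comm (g x)]
    congr 1
    conv_lhs => rw [← (EuclideanSpace.basisFun (Fin m) ℝ).sum_repr (H x)]
    simp [map_sum, EuclideanSpace.basisFun_apply]
  simp_rw [hexp]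
  refine (integral_finsetSum _ fun i _ => (I1 i).add (I2 i)).trans ?_
  refine Finset.sum_eq_zero fun i _ => ?_
  refine (integral_add (I1 i) (I2 i)).trans ?_
  rw [key i]
  ring

section SpaceTime

variable {E : Type*} [NormedAddCommGroup E] [NormedSpace ℝ E]
  {z : E → ℝ → ℝ} {A : Set E} {T : ℝ}

lemma uniqueDiffOn_prod_Icc (hA : IsOpen A) (hT : 0 < T) :
    UniqueDiffOn ℝ (A ×ˢ Icc 0 T : Set (E × ℝ)) :=
  hA.uniqueDiffOn.prod (uniqueDiffOn_Icc hT)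

/-- The total derivative of a function of space and time on a cylinder. -/
def cylDeriv (z : E → ℝ → ℝ) (A : Set E) (T : ℝ) (q : E × ℝ) : E × ℝ →L[ℝ] ℝ :=
  fderivWithin ℝ (fun q : E × ℝ => z q.1 q.2) (A ×ˢ Icc 0 T) q

lemma continuousOn_cylDeriv (hA : IsOpen A) (hT : 0 < T)
    (hz : ContDiffOn ℝ 1 (fun q : E × ℝ => z q.1 q.2) (A ×ˢ Icc 0 T)) :
    ContinuousOn (cylDeriv z A T) (A ×ˢ Icc 0 T) :=
  hz.continuousOn_fderivWithin (uniqueDiffOn_prod_Icc hA hT) le_rfl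

lemma hasFDerivAt_space (hA : IsOpen A)
    (hz : ContDiffOn ℝ 1 (fun q : E × ℝ => z q.1 q.2) (A ×ˢ Icc 0 T))
    {x : E} {t : ℝ} (hx : x ∈ A) (ht : t ∈ Icc 0 T) :
    HasFDerivAt (fun x => z x t)
      ((cylDeriv z A T (x, t)).comp (ContinuousLinearMap.inl ℝ E ℝ)) x := by
  have h1 : HasFDerivWithinAt (fun q : E × ℝ => z q.1 q.2) (cylDeriv z A T (x, t))
      (A ×ˢ Icc 0 T) (x, t) :=
    ((hz.differentiableOn one_ne_zero) (x, t) ⟨hx, ht⟩).hasFDerivWithinAt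
  have h2 : HasFDerivWithinAt (fun x : E => (x, t)) (ContinuousLinearMap.inl ℝ E ℝ) A x :=
    (hasFDerivAt_prodMk_left x t).hasFDerivWithinAt
  exact (h1.comp x h2 (show MapsTo (fun x : E => (x, t)) A (A ×ˢ Icc 0 T) from
    fun y hy => ⟨hy, ht⟩)).hasFDerivAt (hA.mem_nhds hx)

lemma hasDerivAt_time (hA : IsOpen A)
    (hz : ContDiffOn ℝ 1 (fun q : E × ℝ => z q.1 q.2) (A ×ˢ Icc 0 T))
    {x : E} {t : ℝ} (hx : x ∈ A) (ht : t ∈ Ioo 0 T) :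
    HasDerivAt (z x) (cylDeriv z A T (x, t) (0, 1)) t := by
  have h1 : HasFDerivAt (fun q : E × ℝ => z q.1 q.2) (cylDeriv z A T (x, t)) (x, t) :=
    ((hz.differentiableOn one_ne_zero) (x, t)
      ⟨hx, Ioo_subset_Icc_self ht⟩).hasFDerivWithinAt.hasFDerivAt
      (prod_mem_nhds (hA.mem_nhds hx) (Icc_mem_nhds ht.1 ht.2))
  have h2 : HasDerivAt (fun s : ℝ => (x, s)) ((0 : E), (1 : ℝ)) t :=
    (hasDerivAt_const t x).prodMk (hasDerivAt_id t)
  exact h1.comp_hasDerivAt t h2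

lemma cylDeriv_eq_zero (hA : IsOpen A) (hT : 0 < T) {K : Set E} (hK : IsClosed K)
    (h0 : ∀ x, x ∉ K → ∀ t, z x t = 0) {q : E × ℝ} (hq : q ∈ A ×ˢ Icc 0 T) (hqK : q.1 ∉ K) :
    cylDeriv z A T q = 0 := by
  have h1 : HasFDerivAt (fun q : E × ℝ => z q.1 q.2) (0 : E × ℝ →L[ℝ] ℝ) q := by
    refine (hasFDerivAt_const (0 : ℝ) q).congr_of_eventuallyEq ?_
    have : (Prod.fst ⁻¹' Kᶜ : Set (E × ℝ)) ∈ nhds q :=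
      (hK.isOpen_compl.preimage continuous_fst).mem_nhds hqK
    filter_upwards [this] with r hr using h0 r.1 hr r.2
  exact h1.hasFDerivWithinAt.fderivWithin (uniqueDiffOn_prod_Icc hA hT q hq)

end SpaceTime

/-- Integrated transport identity: for `z` compactly supported in space and vanishing at the
final time, the space-time integral of `∂ₜz + div (z H)` is minus the initial integral of `z`. -/
lemma integral_transport {m : ℕ} {T : ℝ} (hT : 0 < T) {U K : Set (Esp m)} (hU : IsOpen U)
    (hK : IsCompact K) (hKU : K ⊆ U) {H : Esp m → Esp m} (hH : ContDiffOn ℝ 1 H U)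
    {z : Esp m → ℝ → ℝ}
    (hz : ContDiffOn ℝ 1 (fun q : Esp m × ℝ => z q.1 q.2) (univ ×ˢ Icc 0 T))
    (h0 : ∀ x, x ∉ K → ∀ t, z x t = 0) (hzT : ∀ x, z x T = 0) :
    Integrable (fun q : Esp m × ℝ => deriv (z q.1) q.2
      + fderiv ℝ (fun x => z x q.2) q.1 (H q.1) + z q.1 q.2 * divergence H q.1)
      (volume.prod (volume.restrict (Ioo 0 T))) ∧
    ∫ q, (deriv (z q.1) q.2
      + fderiv ℝ (fun x => z x q.2) q.1 (H q.1) + z q.1 q.2 * divergence H q.1)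
      ∂(volume.prod (volume.restrict (Ioo 0 T))) = - ∫ x, z x 0 := by
  set μ : Measure (Esp m × ℝ) := volume.prod (volume.restrict (Ioo 0 T)) with hμ
  have hμ' : μ = (volume : Measure (Esp m × ℝ)).restrict (univ ×ˢ Ioo 0 T) := by
    rw [hμ, Measure.volume_eq_prod, ← Measure.prod_restrict, Measure.restrict_univ]
  have hμI : μ = (volume : Measure (Esp m × ℝ)).restrict (univ ×ˢ Icc 0 T) := by
    rw [hμ, Measure.volume_eq_prod, ← Measure.prod_restrict, Measure.restrict_univ,
      restrict_Ioo_eq_restrict_Icc]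
  have hKT : IsCompact (K ×ˢ Icc 0 T) := hK.prod isCompact_Icc
  have hsub : K ×ˢ Icc 0 T ⊆ (univ ×ˢ Icc 0 T : Set (Esp m × ℝ)) :=
    prod_mono (subset_univ _) le_rfl
  have hF := (continuousOn_cylDeriv isOpen_univ hT hz).mono hsub
  have hHK : ContinuousOn (fun q : Esp m × ℝ => H q.1) (K ×ˢ Icc 0 T) :=
    (hH.continuousOn.mono hKU).comp continuousOn_fst fun q hq => hq.1
  have hdK : ContinuousOn (fun q : Esp m × ℝ => divergence H q.1) (K ×ˢ Icc 0 T) :=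
    ((continuousOn_divergence hU hH).mono hKU).comp continuousOn_fst fun q hq => hq.1
  have integ : ∀ g : Esp m × ℝ → ℝ, ContinuousOn g (K ×ˢ Icc 0 T) →
      (∀ q ∈ (univ ×ˢ Icc 0 T : Set (Esp m × ℝ)), q.1 ∉ K → g q = 0) → Integrable g μ := by
    intro g hg hg0
    have hmeas : MeasurableSet (univ ×ˢ Icc 0 T : Set (Esp m × ℝ)) :=
      MeasurableSet.univ.prod measurableSet_Icc
    rw [hμI]
    change IntegrableOn g _ _
    rw [← integrable_indicator_iff hmeas]
    refine integrable_of_eq_zero_off_compact hKT (hg.congr fun q hq => ?_) fun q hq => ?_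
    · exact indicator_of_mem (hsub hq) g
    · by_cases h : q ∈ (univ ×ˢ Icc 0 T : Set (Esp m × ℝ))
      · rw [indicator_of_mem h]
        exact hg0 q h fun hk => hq ⟨hk, h.2⟩
      · exact indicator_of_notMem h g
  have hae : ∀ᵐ q ∂μ, q ∈ (univ ×ˢ Ioo 0 T : Set (Esp m × ℝ)) := by
    rw [hμ']; exact ae_restrict_mem (MeasurableSet.univ.prod measurableSet_Ioo)
  have eT : ∀ x, ∀ t ∈ Ioo 0 T, deriv (z x) t = cylDeriv z univ T (x, t) (0, 1) :=
    fun x t ht => (hasDerivAt_time isOpen_univ hz (mem_univ x) ht).deriv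
  have eX : ∀ x, ∀ t ∈ Icc 0 T, fderiv ℝ (fun x => z x t) x (H x)
      = cylDeriv z univ T (x, t) (H x, 0) := fun x t ht => by
    rw [(hasFDerivAt_space isOpen_univ hz (mem_univ x) ht).fderiv]; simp
  have I1' : Integrable (fun q : Esp m × ℝ => cylDeriv z univ T q (0, 1)) μ :=
    integ _ (hF.clm_apply continuousOn_const) fun q hq hqK => by
      simp [cylDeriv_eq_zero isOpen_univ hT hK.isClosed h0 hq hqK]
  have I2' : Integrable (fun q : Esp m × ℝ => cylDeriv z univ T q (H q.1, 0)
      + z q.1 q.2 * divergence H q.1) μ :=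
    integ _ ((hF.clm_apply (hHK.prodMk continuousOn_const)).add
      ((hz.continuousOn.mono hsub).mul hdK)) fun q hq hqK => by
      simp [cylDeriv_eq_zero isOpen_univ hT hK.isClosed h0 hq hqK, h0 q.1 hqK]
  have I1 : Integrable (fun q : Esp m × ℝ => deriv (z q.1) q.2) μ :=
    I1'.congr (by filter_upwards [hae] with q hq using (eT q.1 q.2 hq.2).symm)
  have I2 : Integrable (fun q : Esp m × ℝ => fderiv ℝ (fun x => z x q.2) q.1 (H q.1)
      + z q.1 q.2 * divergence H q.1) μ :=
    I2'.congr (by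
      filter_upwards [hae] with q hq
      rw [eX q.1 q.2 (Ioo_subset_Icc_self hq.2)])
  have V1 : ∫ q, deriv (z q.1) q.2 ∂μ = - ∫ x, z x 0 := by
    rw [hμ, integral_prod _ I1, ← integral_neg]
    refine integral_congr_ae ?_
    filter_upwards [I1.prod_right_ae] with x hx
    have hdz : IntervalIntegrable (deriv (z x)) volume 0 T := by
      rw [intervalIntegrable_iff_integrableOn_Ioo_of_le hT.le]; exact hx
    have hcont : ContinuousOn (z x) (Icc 0 T) :=
      hz.continuousOn.comp (f := fun t : ℝ => (x, t)) (by fun_prop) fun t ht => ⟨mem_univ _, ht⟩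
    have := intervalIntegral.integral_eq_sub_of_hasDerivAt_of_le hT.le hcont
      (fun t ht => (hasDerivAt_time isOpen_univ hz (mem_univ x) ht).differentiableAt.hasDerivAt)
      hdz
    rw [intervalIntegral.integral_of_le hT.le, integral_Ioc_eq_integral_Ioo] at this
    simpa [hzT x] using this
  have V2 : ∫ q, (fderiv ℝ (fun x => z x q.2) q.1 (H q.1)
      + z q.1 q.2 * divergence H q.1) ∂μ = 0 := by
    rw [hμ, integral_prod_symm _ I2]
    refine (setIntegral_congr_fun measurableSet_Ioo fun t ht => ?_).trans
      (integral_zero _ _)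
    have hzt : ContDiff ℝ 1 (fun x => z x t) := by
      rw [← contDiffOn_univ]
      exact hz.comp (f := fun x : Esp m => (x, t)) (by fun_prop)
        fun x _ => ⟨mem_univ _, Ioo_subset_Icc_self ht⟩
    have hts : tsupport (fun x => z x t) ⊆ K := by
      refine closure_minimal (fun x hx => ?_) hK.isClosed
      by_contra hxK
      exact hx (h0 x hxK t)
    exact integral_fderiv_apply_add_mul_divergence hU hzt
      (hK.of_isClosed_subset (isClosed_tsupport _) hts) (hts.trans hKU) hH
  refine ⟨(I1.add I2).congr (Filter.Eventually.of_forall fun q => ?_), ?_⟩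
  · simp only [Pi.add_apply]; ring
  · simp_rw [add_assoc]
    rw [integral_add I1 I2, V1, V2, add_zero]

lemma deriv_smoothTransition_nonneg (r : ℝ) : 0 ≤ deriv Real.smoothTransition r :=
  Real.smoothTransition.monotone.deriv_nonneg

lemma hasDerivAt_smoothTransition (r : ℝ) :
    HasDerivAt Real.smoothTransition (deriv Real.smoothTransition r) r :=
  ((Real.smoothTransition.contDiff (n := 1)).differentiable one_ne_zero r).hasDerivAt

lemma contDiff_smoothTransition_one : ContDiff ℝ 1 Real.smoothTransition :=
  Real.smoothTransition.contDiff (n := 1)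

lemma continuous_deriv_smoothTransition : Continuous (deriv Real.smoothTransition) :=
  contDiff_smoothTransition_one.continuous_deriv le_rfl

lemma deriv_smoothTransition_of_nonpos {r : ℝ} (hr : r ≤ 0) :
    deriv Real.smoothTransition r = 0 := by
  have h : IsLocalMin Real.smoothTransition r := Filter.Eventually.of_forall fun s => by
    rw [Real.smoothTransition.zero_of_nonpos hr]
    exact Real.smoothTransition.nonneg s
  exact h.deriv_eq_zero

lemma deriv_smoothTransition_of_one_le {r : ℝ} (hr : 1 ≤ r) :
    deriv Real.smoothTransition r = 0 := by
  have h : IsLocalMax Real.smoothTransition r := Filter.Eventually.of_forall fun s => by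
    rw [Real.smoothTransition.one_of_one_le hr]
    exact Real.smoothTransition.le_one s
  exact h.deriv_eq_zero

/-- `k` measures the distance to the outflow part of the boundary of `D` and `h` the distance to
the inflow part: along `H`, `k` decreases at a definite rate and `h` does not decrease. -/
structure IsExitPair {m : ℕ} (D : Set (Esp m)) (H : Esp m → Esp m) (k h : Esp m → ℝ)
    (T δ B : ℝ) : Prop where
  isOpen : IsOpen D
  contDiffOn_field : ContDiffOn ℝ 1 H D
  contDiffOn_exit : ContDiffOn ℝ 1 k D
  contDiffOn_entry : ContDiffOn ℝ 1 h D
  exit_le : ∀ x ∈ D, k x ≤ δ * T / 2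
  exit_pos : ∀ x ∈ D, 0 < k x
  entry_pos : ∀ x ∈ D, 0 < h x
  fderiv_exit_le : ∀ x ∈ D, fderiv ℝ k x (H x) ≤ -δ
  le_fderiv_exit : ∀ x ∈ D, -B ≤ fderiv ℝ k x (H x)
  fderiv_entry_nonneg : ∀ x ∈ D, 0 ≤ fderiv ℝ h x (H x)
  isCompact_core : ∀ σ > 0, IsCompact {x ∈ D | σ ≤ k x ∧ σ ≤ h x}

/-- The cutoff function at scale `1 / N`. -/
def cutoff (N r : ℝ) : ℝ := Real.smoothTransition (N * r - 1)

/-- The derivative of the cutoff function at scale `1 / N`. -/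
def cutoffDeriv (N r : ℝ) : ℝ := N * deriv Real.smoothTransition (N * r - 1)

lemma hasDerivAt_cutoff (N r : ℝ) : HasDerivAt (cutoff N) (cutoffDeriv N r) r := by
  have h1 : HasDerivAt (fun r : ℝ => N * r - 1) N r := by
    simpa using ((hasDerivAt_id r).const_mul N).sub_const 1
  have := (hasDerivAt_smoothTransition (N * r - 1)).comp r h1
  rwa [mul_comm] at this

lemma contDiff_cutoff (N : ℝ) : ContDiff ℝ 1 (cutoff N) :=
  contDiff_smoothTransition_one.comp (by fun_prop)

lemma continuous_cutoffDeriv (N : ℝ) : Continuous (cutoffDeriv N) :=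
  continuous_const.mul (continuous_deriv_smoothTransition.comp (by fun_prop))

lemma cutoff_nonneg (N r : ℝ) : 0 ≤ cutoff N r := Real.smoothTransition.nonneg _

lemma cutoff_le_one (N r : ℝ) : cutoff N r ≤ 1 := Real.smoothTransition.le_one _

lemma cutoffDeriv_nonneg {N : ℝ} (hN : 0 < N) (r : ℝ) : 0 ≤ cutoffDeriv N r :=
  mul_nonneg hN.le (deriv_smoothTransition_nonneg _)

lemma cutoff_eq_zero {N r : ℝ} (hN : 0 < N) (hr : r < 1 / N) : cutoff N r = 0 := by
  rw [lt_div_iff₀ hN] at hr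
  exact Real.smoothTransition.zero_of_nonpos (by linarith)

lemma cutoffDeriv_eq_zero {N r : ℝ} (hN : 0 < N) (hr : r < 1 / N) : cutoffDeriv N r = 0 := by
  rw [lt_div_iff₀ hN] at hr
  rw [cutoffDeriv, deriv_smoothTransition_of_nonpos (by linarith), mul_zero]

lemma cutoffDeriv_eq_zero_of_le {N r : ℝ} (hN : 0 < N) (hr : 2 / N ≤ r) :
    cutoffDeriv N r = 0 := by
  rw [div_le_iff₀ hN] at hr
  rw [cutoffDeriv, deriv_smoothTransition_of_one_le (by linarith), mul_zero]

/-- The Carleman-type weight, cut off near the boundary of `D`. -/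
def exitWeight {m : ℕ} (D : Set (Esp m)) (k h : Esp m → ℝ) (N κ δ T : ℝ) (x : Esp m) (t : ℝ) : ℝ :=
  D.indicator (fun x => cutoff N (h x) * cutoff N (k x) * Real.exp (-(κ / δ * k x))
    * Real.smoothTransition (2 * (T - t - k x / δ) / T)) x

section Weight

variable {m : ℕ} {D : Set (Esp m)} {H : Esp m → Esp m} {k h : Esp m → ℝ} {T δ B N κ : ℝ}

lemma exitWeight_of_mem {x : Esp m} (hx : x ∈ D) (t : ℝ) :
    exitWeight D k h N κ δ T x t = cutoff N (h x) * cutoff N (k x) * Real.exp (-(κ / δ * k x))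
      * Real.smoothTransition (2 * (T - t - k x / δ) / T) := indicator_of_mem hx _

lemma exitWeight_eq_zero (hN : 0 < N) {x : Esp m}
    (hx : x ∉ {x ∈ D | 1 / N ≤ k x ∧ 1 / N ≤ h x}) (t : ℝ) :
    exitWeight D k h N κ δ T x t = 0 := by
  by_cases hD : x ∈ D
  · rw [exitWeight_of_mem hD]
    by_cases hk : 1 / N ≤ k x
    · have : h x < 1 / N := by
        by_contra hh
        exact hx ⟨hD, hk, not_lt.1 hh⟩
      simp [cutoff_eq_zero hN this]
    · simp [cutoff_eq_zero hN (not_le.1 hk)]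
  · exact indicator_of_notMem hD _

lemma exitWeight_nonneg (x : Esp m) (t : ℝ) : 0 ≤ exitWeight D k h N κ δ T x t :=
  indicator_nonneg (fun _ _ => mul_nonneg (mul_nonneg (mul_nonneg (cutoff_nonneg _ _)
    (cutoff_nonneg _ _)) (Real.exp_pos _).le) (Real.smoothTransition.nonneg _)) x

lemma exitWeight_antitone (hT : 0 < T) {x : Esp m} {s t : ℝ} (hst : s ≤ t) :
    exitWeight D k h N κ δ T x t ≤ exitWeight D k h N κ δ T x s := by
  by_cases hx : x ∈ D
  · rw [exitWeight_of_mem hx, exitWeight_of_mem hx]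
    refine mul_le_mul_of_nonneg_left (Real.smoothTransition.monotone (by gcongr))
      (mul_nonneg (mul_nonneg (cutoff_nonneg _ _) (cutoff_nonneg _ _)) (Real.exp_pos _).le)
  · simp [exitWeight, hx]

lemma IsExitPair.exitWeight_final (P : IsExitPair D H k h T δ B) (hT : 0 < T) (hδ : 0 < δ)
    (x : Esp m) : exitWeight D k h N κ δ T x T = 0 := by
  by_cases hx : x ∈ D
  · rw [exitWeight_of_mem hx, Real.smoothTransition.zero_of_nonpos, mul_zero]
    have : 0 < k x / δ := div_pos (P.exit_pos x hx) hδ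
    exact div_nonpos_of_nonpos_of_nonneg (by linarith) hT.le
  · simp [exitWeight, hx]

lemma IsExitPair.le_exitWeight_zero (P : IsExitPair D H k h T δ B) (hT : 0 < T) (hδ : 0 < δ)
    (hκ : 0 ≤ κ) {x : Esp m} (hx : x ∈ D) :
    cutoff N (h x) * cutoff N (k x) * Real.exp (-(κ * T / 2))
      ≤ exitWeight D k h N κ δ T x 0 := by
  have hk : k x / δ ≤ T / 2 := by
    rw [div_le_iff₀ hδ]; linarith [P.exit_le x hx]
  rw [exitWeight_of_mem hx, Real.smoothTransition.one_of_one_le, mul_one]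
  · refine mul_le_mul_of_nonneg_left (Real.exp_le_exp.2 ?_)
      (mul_nonneg (cutoff_nonneg _ _) (cutoff_nonneg _ _))
    have := mul_le_mul_of_nonneg_left hk hκ
    have e : κ / δ * k x = κ * (k x / δ) := by ring
    rw [e]; linarith
  · rw [le_div_iff₀ hT]; linarith

lemma IsExitPair.contDiff_exitWeight (P : IsExitPair D H k h T δ B) (hN : 0 < N) :
    ContDiff ℝ 1 (fun q : Esp m × ℝ => exitWeight D k h N κ δ T q.1 q.2) := by
  rw [contDiff_iff_contDiffAt]
  intro q
  by_cases hq : q.1 ∈ D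
  · have hk : ContDiffAt ℝ 1 (fun q : Esp m × ℝ => k q.1) q :=
      (P.contDiffOn_exit.contDiffAt (P.isOpen.mem_nhds hq)).comp q contDiffAt_fst
    have hh : ContDiffAt ℝ 1 (fun q : Esp m × ℝ => h q.1) q :=
      (P.contDiffOn_entry.contDiffAt (P.isOpen.mem_nhds hq)).comp q contDiffAt_fst
    have e : (fun q : Esp m × ℝ => exitWeight D k h N κ δ T q.1 q.2) =ᶠ[nhds q]
        fun q => cutoff N (h q.1) * cutoff N (k q.1) * Real.exp (-(κ / δ * k q.1))
      * Real.smoothTransition (2 * (T - q.2 - k q.1 / δ) / T) := by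
      filter_upwards [(P.isOpen.preimage continuous_fst).mem_nhds hq] with r hr
        using exitWeight_of_mem hr _
    refine ContDiffAt.congr_of_eventuallyEq ?_ e
    refine ((((contDiff_cutoff N).contDiffAt.comp q hh).mul
      ((contDiff_cutoff N).contDiffAt.comp q hk)).mul ?_).mul
      (contDiff_smoothTransition_one.contDiffAt.comp q ?_)
    · exact (contDiffAt_const.mul hk).neg.exp
    · exact (contDiffAt_const.mul ((contDiffAt_const.sub contDiffAt_snd).sub
        (hk.div_const δ))).div_const T
  · have hK := P.isCompact_core (1 / N) (by positivity)
    have e : (fun q : Esp m × ℝ => exitWeight D k h N κ δ T q.1 q.2) =ᶠ[nhds q] fun _ => 0 := by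
      filter_upwards [(hK.isClosed.isOpen_compl.preimage continuous_fst).mem_nhds
        (show q ∈ _ from fun hq' => hq hq'.1)] with r hr using exitWeight_eq_zero hN hr _
    exact contDiffAt_const.congr_of_eventuallyEq e

/-- The weight grows along the flow, up to the contribution of the cutoff near the exit. -/
lemma IsExitPair.exists_transport_exitWeight (P : IsExitPair D H k h T δ B) (hT : 0 < T)
    (hδ : 0 < δ) (hN : 0 < N) (hκ : 0 ≤ κ) {x : Esp m} (hx : x ∈ D) {t : ℝ} :
    ∃ (a : ℝ) (L : Esp m →L[ℝ] ℝ),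
      HasDerivAt (exitWeight D k h N κ δ T x) a t ∧
      HasFDerivAt (fun x => exitWeight D k h N κ δ T x t) L x ∧
      κ * exitWeight D k h N κ δ T x t - B * (cutoff N (h x) * cutoffDeriv N (k x))
        ≤ a + L (H x) := by
  have hk : HasFDerivAt k (fderiv ℝ k x) x :=
    ((P.contDiffOn_exit.differentiableOn one_ne_zero).differentiableAt
      (P.isOpen.mem_nhds hx)).hasFDerivAt
  have hh : HasFDerivAt h (fderiv ℝ h x) x :=
    ((P.contDiffOn_entry.differentiableOn one_ne_zero).differentiableAt
      (P.isOpen.mem_nhds hx)).hasFDerivAt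
  set r : ℝ := 2 * (T - t - k x / δ) / T with hr
  have hη := (hasDerivAt_cutoff N (h x)).comp_hasFDerivAt x hh
  have hζ := (hasDerivAt_cutoff N (k x)).comp_hasFDerivAt x hk
  have he : HasFDerivAt (fun x => Real.exp (-(κ / δ * k x)))
      (Real.exp (-(κ / δ * k x)) • -((κ / δ) • fderiv ℝ k x)) x :=
    (hk.const_mul (κ / δ)).neg.exp
  have hχx : HasFDerivAt (fun x => 2 * (T - t - k x / δ) / T)
      ((-(2 / (δ * T))) • fderiv ℝ k x) x := by
    have : HasDerivAt (fun s : ℝ => 2 * (T - t - s / δ) / T) (-(2 / (δ * T))) (k x) := by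
      have h1 := ((((hasDerivAt_id (k x)).div_const δ).const_sub (T - t)).const_mul 2).div_const T
      exact h1.congr_deriv (by field_simp)
    exact this.comp_hasFDerivAt x hk
  have hχt : HasDerivAt (fun t => 2 * (T - t - k x / δ) / T) (-(2 / T)) t := by
    have h1 := ((((hasDerivAt_id t).const_sub T).sub_const (k x / δ)).const_mul 2).div_const T
    exact h1.congr_deriv (by field_simp)
  have hst := hasDerivAt_smoothTransition r
  have hW := ((hη.mul hζ).mul he).mul (hst.comp_hasFDerivAt x hχx)
  have hWt := (hst.comp t hχt).const_mul
    (cutoff N (h x) * cutoff N (k x) * Real.exp (-(κ / δ * k x)))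
  refine ⟨_, _, hWt.congr_of_eventuallyEq (Filter.Eventually.of_forall fun s =>
    exitWeight_of_mem hx s), hW.congr_of_eventuallyEq ?_, ?_⟩
  · filter_upwards [P.isOpen.mem_nhds hx] with y hy using exitWeight_of_mem hy t
  · rw [exitWeight_of_mem hx, ← hr]
    simp only [_root_.add_apply, _root_.smul_apply, smul_eq_mul,
      Function.comp_apply, Pi.mul_apply, _root_.neg_apply, ← hr]
    have g1 := P.fderiv_exit_le x hx
    have g2 := P.le_fderiv_exit x hx
    have g3 := P.fderiv_entry_nonneg x hx
    set kx := fderiv ℝ k x (H x)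
    set hx' := fderiv ℝ h x (H x)
    set η := cutoff N (h x)
    set ζ := cutoff N (k x)
    set η' := cutoffDeriv N (h x)
    set ζ' := cutoffDeriv N (k x)
    set e := Real.exp (-(κ / δ * k x))
    set χ := Real.smoothTransition r
    set χ' := deriv Real.smoothTransition r
    have η0 : 0 ≤ η := cutoff_nonneg _ _
    have ζ0 : 0 ≤ ζ := cutoff_nonneg _ _
    have η'0 : 0 ≤ η' := cutoffDeriv_nonneg hN _
    have ζ'0 : 0 ≤ ζ' := cutoffDeriv_nonneg hN _
    have e0 : 0 ≤ e := (Real.exp_pos _).le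
    have e1 : e ≤ 1 := Real.exp_le_one_iff.2 (by
      have := P.exit_pos x hx
      have : 0 ≤ κ / δ * k x := by positivity
      linarith)
    have χ0 : 0 ≤ χ := Real.smoothTransition.nonneg _
    have χ1 : χ ≤ 1 := Real.smoothTransition.le_one _
    have χ'0 : 0 ≤ χ' := deriv_smoothTransition_nonneg _
    have t1 : 0 ≤ (κ * (-kx / δ) - κ) * (η * ζ * e * χ) := by
      refine mul_nonneg ?_ (by positivity)
      have : 1 ≤ -kx / δ := by rw [le_div_iff₀ hδ]; linarith
      nlinarith
    have t2 : 0 ≤ η * ζ * e * χ' * (2 / T) * (-kx / δ - 1) := by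
      have : 1 ≤ -kx / δ := by rw [le_div_iff₀ hδ]; linarith
      exact mul_nonneg (by positivity) (by linarith)
    have t3 : 0 ≤ ζ * e * χ * η' * hx' := by positivity
    have t4 : 0 ≤ η * e * χ * ζ' * (kx + B) := mul_nonneg (by positivity) (by linarith)
    have B0 : 0 ≤ B := by linarith
    have t5 : 0 ≤ B * (η * ζ') * (1 - e * χ) := by
      have : e * χ ≤ 1 := mul_le_one₀ e1 χ0 χ1
      exact mul_nonneg (by positivity) (by linarith)
    have key := add_nonneg (add_nonneg (add_nonneg t1 t2) (add_nonneg t3 t4)) t5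
    rw [← sub_nonneg]
    refine key.trans_eq ?_
    field_simp
    ring

end Weight

/-- Weighted energy estimate for the transport equation `∂ₜy + H·∇y + p y = f v` with
`y(·, 0) = f a`: the source factor `f` is controlled by `y` near the exit boundary. -/
lemma IsExitPair.energy_estimate {m : ℕ} {D : Set (Esp m)} {H : Esp m → Esp m}
    {k h : Esp m → ℝ} {T δ B N M Λ α M₀ F : ℝ}
    (P : IsExitPair D H k h T δ B) (hT : 0 < T) (hδ : 0 < δ) (hN : 0 < N)
    (hM : 0 < M) (hΛ : 0 ≤ Λ) (hα : 0 < α) (hM₀ : 0 < M₀)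
    (hdiv : ∀ x ∈ D, |divergence H x| ≤ Λ)
    {y v : Esp m → ℝ → ℝ} {p f a : Esp m → ℝ}
    (hy : ContDiffOn ℝ 1 (fun q : Esp m × ℝ => y q.1 q.2) (D ×ˢ Icc 0 T))
    (hv : ContinuousOn (fun q : Esp m × ℝ => v q.1 q.2) (D ×ˢ Icc 0 T))
    (heq : ∀ x ∈ D, ∀ t ∈ Ioo 0 T,
      deriv (y x) t + fderiv ℝ (fun z => y z t) x (H x) + p x * y x t = f x * v x t)
    (hy0 : ∀ x ∈ D, y x 0 = f x * a x)
    (hp : ∀ᵐ x ∂(volume.restrict D), |p x| ≤ M)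
    (hfm : Measurable f) (hf : ∀ᵐ x ∂(volume.restrict D), |f x| ≤ F)
    (ha : ∀ x ∈ D, α ≤ a x ^ 2)
    (hvM : ∀ x ∈ D, ∫ t in Ioo 0 T, v x t ^ 2 ≤ M₀ ^ 2) :
    Integrable (fun q : Esp m × ℝ => D.indicator (fun x => cutoff N (h x) * cutoffDeriv N (k x)) q.1
      * y q.1 q.2 ^ 2) (volume.prod (volume.restrict (Ioo 0 T))) ∧
    ∫ x in D, f x ^ 2 * (cutoff N (h x) * cutoff N (k x)) ≤
      2 * B / α * Real.exp ((2 * M + Λ + 2 * M₀ ^ 2 / α) * T / 2) *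
      ∫ q : Esp m × ℝ, D.indicator (fun x => cutoff N (h x) * cutoffDeriv N (k x)) q.1
        * y q.1 q.2 ^ 2 ∂(volume.prod (volume.restrict (Ioo 0 T))) := by
  set ν : Measure (Esp m × ℝ) := volume.prod (volume.restrict (Ioo 0 T)) with hν
  set μ : ℝ := 2 * M₀ ^ 2 / α with hμ
  have μ0 : 0 < μ := by positivity
  set κ : ℝ := 2 * M + Λ + μ with hκ
  have κ0 : 0 ≤ κ := by positivity
  set K : Set (Esp m) := {x ∈ D | 1 / N ≤ k x ∧ 1 / N ≤ h x} with hK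
  have hKc : IsCompact K := P.isCompact_core _ (by positivity)
  have hKD : K ⊆ D := fun x hx => hx.1
  set W : Esp m → ℝ → ℝ := exitWeight D k h N κ δ T with hW
  have hWc : ContDiff ℝ 1 (fun q : Esp m × ℝ => W q.1 q.2) := P.contDiff_exitWeight hN
  have hW0 : ∀ x, x ∉ K → ∀ t, W x t = 0 := fun x hx t => exitWeight_eq_zero hN hx t
  have hWnn : ∀ x t, 0 ≤ W x t := fun x t => exitWeight_nonneg x t
  have hyK : ContinuousOn (fun q : Esp m × ℝ => y q.1 q.2) (K ×ˢ Icc 0 T) :=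
    hy.continuousOn.mono (prod_mono hKD le_rfl)
  have hvK : ContinuousOn (fun q : Esp m × ℝ => v q.1 q.2) (K ×ˢ Icc 0 T) :=
    hv.mono (prod_mono hKD le_rfl)
  have hνI : ν = (volume : Measure (Esp m × ℝ)).restrict (univ ×ˢ Icc 0 T) := by
    rw [hν, Measure.volume_eq_prod, ← Measure.prod_restrict, Measure.restrict_univ,
      restrict_Ioo_eq_restrict_Icc]
  have integ : ∀ g : Esp m × ℝ → ℝ, ContinuousOn g (K ×ˢ Icc 0 T) →
      (∀ q, q.1 ∉ K → g q = 0) → Integrable g ν := by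
    intro g hg hg0
    have hmeas : MeasurableSet (univ ×ˢ Icc 0 T : Set (Esp m × ℝ)) :=
      MeasurableSet.univ.prod measurableSet_Icc
    rw [hνI]
    change IntegrableOn g _ _
    rw [← integrable_indicator_iff hmeas]
    refine integrable_of_eq_zero_off_compact (hKc.prod isCompact_Icc)
      (hg.congr fun q hq => ?_) fun q hq => ?_
    · exact indicator_of_mem (show q ∈ (univ ×ˢ Icc 0 T : Set (Esp m × ℝ)) from
        ⟨mem_univ _, hq.2⟩) g
    · by_cases h : q ∈ (univ ×ˢ Icc 0 T : Set (Esp m × ℝ))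
      · rw [indicator_of_mem h]
        exact hg0 q fun hk => hq ⟨hk, h.2⟩
      · exact indicator_of_notMem h g
  -- the transported quantity
  set z : Esp m → ℝ → ℝ := fun x t => y x t ^ 2 * W x t with hz
  have hzc : ContDiffOn ℝ 1 (fun q : Esp m × ℝ => z q.1 q.2) (univ ×ˢ Icc 0 T) := by
    intro q hq
    by_cases hqD : q.1 ∈ D
    · have h1 : ContDiffWithinAt ℝ 1 (fun q : Esp m × ℝ => y q.1 q.2) (univ ×ˢ Icc 0 T) q := by
        refine (hy q ⟨hqD, hq.2⟩).mono_of_mem_nhdsWithin ?_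
        have : (D ×ˢ univ : Set (Esp m × ℝ)) ∈ nhds q :=
          (P.isOpen.prod isOpen_univ).mem_nhds ⟨hqD, mem_univ _⟩
        filter_upwards [mem_nhdsWithin_of_mem_nhds this, self_mem_nhdsWithin] with r hr hr'
          using ⟨hr.1, hr'.2⟩
      exact (h1.pow 2).mul hWc.contDiffAt.contDiffWithinAt
    · have e : (fun q : Esp m × ℝ => z q.1 q.2) =ᶠ[nhds q] fun _ => 0 := by
        filter_upwards [(hKc.isClosed.isOpen_compl.preimage continuous_fst).mem_nhds
          (show q ∈ _ from fun hq' => hqD hq'.1)] with r hr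
        simp [hz, hW0 r.1 hr]
      exact (contDiffAt_const.congr_of_eventuallyEq e).contDiffWithinAt
  obtain ⟨-, hVal⟩ := integral_transport hT P.isOpen hKc hKD P.contDiffOn_field hzc
    (fun x hx t => by simp [hz, hW0 x hx]) (fun x => by
      simp [hz, hW, P.exitWeight_final hT hδ x])
  have hInt := (integral_transport hT P.isOpen hKc hKD P.contDiffOn_field hzc
    (fun x hx t => by simp [hz, hW0 x hx]) (fun x => by
      simp [hz, hW, P.exitWeight_final hT hδ x])).1
  rw [← hν] at hVal hInt
  -- the boundary layer term
  set b : Esp m → ℝ := D.indicator (fun x => cutoff N (h x) * cutoffDeriv N (k x)) with hb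
  have hb0 : ∀ x, x ∉ K → b x = 0 := by
    intro x hx
    by_cases hD : x ∈ D
    · rw [hb, indicator_of_mem hD]
      by_cases hk : 1 / N ≤ k x
      · have : h x < 1 / N := by
          by_contra hh
          exact hx ⟨hD, hk, not_lt.1 hh⟩
        simp [cutoff_eq_zero hN this]
      · simp [cutoffDeriv_eq_zero hN (not_le.1 hk)]
    · exact indicator_of_notMem hD _
  have hbK : ContinuousOn b K := by
    refine (ContinuousOn.mul
      ((contDiff_cutoff N).continuous.comp_continuousOn (P.contDiffOn_entry.continuousOn.mono hKD))
      ((continuous_cutoffDeriv N).comp_continuousOn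
        (P.contDiffOn_exit.continuousOn.mono hKD))).congr fun x hx => ?_
    exact indicator_of_mem (hKD hx) _
  have IB : Integrable (fun q : Esp m × ℝ => b q.1 * y q.1 q.2 ^ 2) ν :=
    integ _ ((hbK.comp continuousOn_fst fun q hq => hq.1).mul (hyK.pow 2))
      fun q hq => by simp [hb0 q.1 hq]
  refine ⟨IB, ?_⟩
  -- the source term
  set G : Esp m → ℝ := D.indicator (fun x => f x ^ 2) with hG
  have hGm : Measurable G := (hfm.pow_const 2).indicator P.isOpen.measurableSet
  have hGb : ∀ᵐ x, ‖G x‖ ≤ F ^ 2 := by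
    rw [ae_restrict_iff' P.isOpen.measurableSet] at hf
    filter_upwards [hf] with x hx
    by_cases hD : x ∈ D
    · rw [hG, indicator_of_mem hD, Real.norm_eq_abs, abs_pow]
      exact pow_le_pow_left₀ (abs_nonneg _) (hx hD) 2
    · rw [hG, indicator_of_notMem hD]; simpa using sq_nonneg F
  have hGnn : ∀ x, 0 ≤ G x := fun x => indicator_nonneg (fun x _ => sq_nonneg (f x)) x
  have hGb' : ∀ᵐ q ∂ν, ‖G q.1‖ ≤ F ^ 2 := Measure.quasiMeasurePreserving_fst.ae hGb
  have hWx : Continuous fun x => W x 0 :=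
    hWc.continuous.comp (f := fun x : Esp m => (x, (0 : ℝ))) (by fun_prop)
  have IS : Integrable (fun q : Esp m × ℝ => G q.1 * (W q.1 0 * v q.1 q.2 ^ 2)) ν :=
    (integ (fun q => W q.1 0 * v q.1 q.2 ^ 2)
      ((hWx.comp continuous_fst).continuousOn.mul (hvK.pow 2))
      (fun q hq => by simp [hW0 q.1 hq])).bdd_mul
      (hGm.comp measurable_fst).aestronglyMeasurable hGb'
  have IG : Integrable (fun x => G x * W x 0) :=
    (integrable_of_eq_zero_off_compact hKc hWx.continuousOn fun x hx => hW0 x hx 0).bdd_mul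
      hGm.aestronglyMeasurable hGb
  have hlow : ∀ᵐ q ∂ν, -(1 / μ * (G q.1 * (W q.1 0 * v q.1 q.2 ^ 2)) + B * (b q.1 * y q.1 q.2 ^ 2))
      ≤ deriv (z q.1) q.2 + fderiv ℝ (fun x => z x q.2) q.1 (H q.1)
        + z q.1 q.2 * divergence H q.1 := by
    have hp' : ∀ᵐ q ∂ν, q.1 ∈ D → |p q.1| ≤ M := by
      rw [ae_restrict_iff' P.isOpen.measurableSet] at hp
      exact Measure.quasiMeasurePreserving_fst.ae hp
    have ht' : ∀ᵐ q ∂ν, q.2 ∈ Ioo 0 T :=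
      Measure.quasiMeasurePreserving_snd.ae (ae_restrict_mem measurableSet_Ioo)
    filter_upwards [hp', ht'] with ⟨x, t⟩ hpx ht
    simp only at hpx ht ⊢
    by_cases hD : x ∈ D
    · specialize hpx hD
      obtain ⟨wt, L, h1, h2, h3⟩ := P.exists_transport_exitWeight hT hδ hN κ0 hD (t := t)
      have hyt := (hasDerivAt_time P.isOpen hy hD ht).differentiableAt.hasDerivAt
      have hyx := (hasFDerivAt_space P.isOpen hy hD
        (Ioo_subset_Icc_self ht)).differentiableAt.hasFDerivAt
      have hzt : HasDerivAt (z x) (2 * y x t * deriv (y x) t * W x t + y x t ^ 2 * wt) t :=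
        ((hyt.pow 2).mul h1).congr_deriv (by simp [hW])
      have hzx : HasFDerivAt (fun x => z x t) (y x t ^ 2 • L
          + W x t • (2 * y x t) • fderiv ℝ (fun z => y z t) x) x :=
        ((hyx.pow 2).mul h2).congr_fderiv (by simp [hW])
      rw [hzt.deriv, hzx.fderiv]
      simp only [_root_.add_apply, _root_.smul_apply, smul_eq_mul, hz]
      have e1 := heq x hD t ht
      have e2 : W x t ≤ W x 0 := exitWeight_antitone hT ht.1.le
      have e3 := abs_le.1 (hdiv x hD)
      have e4 := abs_le.1 hpx
      have e5 := hWnn x t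
      rw [hG, hb, indicator_of_mem hD, indicator_of_mem hD]
      set w := W x t
      set Y := y x t
      set yt := deriv (y x) t
      set yx := fderiv ℝ (fun z => y z t) x (H x)
      set V := v x t
      set bb := cutoff N (h x) * cutoffDeriv N (k x)
      have e6 : yt + yx = f x * V - p x * Y := by linarith
      have s1 : 0 ≤ Y ^ 2 * (wt + L (H x) - (κ * w - B * bb)) :=
        mul_nonneg (sq_nonneg _) (by linarith)
      have s2 : 0 ≤ Y ^ 2 * w * (M - p x) :=
        mul_nonneg (mul_nonneg (sq_nonneg _) e5) (by linarith)
      have s3 : 0 ≤ Y ^ 2 * w * (Λ + divergence H x) :=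
        mul_nonneg (mul_nonneg (sq_nonneg _) e5) (by linarith)
      have s4 : 0 ≤ w * (1 / μ) * (f x * V + μ * Y) ^ 2 := by positivity
      have s5 : 0 ≤ 1 / μ * (f x ^ 2 * V ^ 2) * (W x 0 - w) :=
        mul_nonneg (by positivity) (by linarith)
      have s4' : w * (1 / μ) * (f x * V + μ * Y) ^ 2
          = 1 / μ * (f x ^ 2 * V ^ 2) * w + 2 * (f x * V) * Y * w + μ * Y ^ 2 * w := by
        field_simp; ring
      have goal_eq : (2 : ℝ) * Y * yt * w + Y ^ 2 * wt + (Y ^ 2 * L (H x) + w * (2 * Y * yx))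
          + Y ^ 2 * w * divergence H x = 2 * Y * w * (f x * V - p x * Y) + Y ^ 2 * (wt + L (H x))
          + Y ^ 2 * w * divergence H x := by
        rw [← e6]; ring
      rw [s4'] at s4
      have hκw : Y ^ 2 * (κ * w) = 2 * (Y ^ 2 * w * M) + Y ^ 2 * w * Λ + μ * Y ^ 2 * w := by
        rw [hκ]; ring
      rw [goal_eq]
      linarith
    · have hxK : x ∉ K := fun hx => hD hx.1
      have c1 : z x = fun _ => 0 := funext fun s => by simp [hz, hW0 x hxK]
      have c2 : (fun x => z x t) =ᶠ[nhds x] fun _ => 0 := by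
        filter_upwards [hKc.isClosed.isOpen_compl.mem_nhds hxK] with r hr
        simp [hz, hW0 r hr]
      rw [c2.fderiv_eq, c1]
      simp [hG, hb, hD]
  have initial_le : ∫ x, z x 0 ≤ 1 / μ * ∫ q : Esp m × ℝ, G q.1 * (W q.1 0 * v q.1 q.2 ^ 2) ∂ν
      + B * ∫ q : Esp m × ℝ, b q.1 * y q.1 q.2 ^ 2 ∂ν := by
    have h1 := integral_mono_ae ((IS.const_mul (1 / μ)).add (IB.const_mul B)).neg hInt hlow
    rw [hVal] at h1
    simp only [Pi.neg_apply, Pi.add_apply] at h1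
    rw [integral_neg, integral_add (IS.const_mul _) (IB.const_mul _), integral_const_mul,
      integral_const_mul] at h1
    linarith
  have source_le : ∫ q : Esp m × ℝ, G q.1 * (W q.1 0 * v q.1 q.2 ^ 2) ∂ν
      ≤ M₀ ^ 2 * ∫ x, G x * W x 0 := by
    rw [hν, integral_prod _ IS, ← integral_const_mul]
    refine integral_mono IS.integral_prod_left (IG.const_mul _) fun x => ?_
    simp only
    by_cases hD : x ∈ D
    · simp_rw [← mul_assoc]
      rw [integral_const_mul, mul_assoc, mul_comm (M₀ ^ 2), mul_assoc]
      have := mul_le_mul_of_nonneg_left (hvM x hD) (mul_nonneg (hGnn x) (hWnn x 0))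
      linarith
    · simp [hG, hD]
  have le_initial : α * ∫ x, G x * W x 0 ≤ ∫ x, z x 0 := by
    rw [← integral_const_mul]
    have hz0 : ∀ x, z x 0 = G x * W x 0 * D.indicator (fun x => a x ^ 2) x := by
      intro x
      by_cases hD : x ∈ D
      · simp only [hz, hG, indicator_of_mem hD, hy0 x hD]; ring
      · simp [hG, hD, hz, hW0 x fun hx => hD hx.1]
    have Iz : Integrable (fun x => z x 0) := by
      refine integrable_of_eq_zero_off_compact hKc ?_ fun x hx => by simp [hz, hW0 x hx]
      exact hzc.continuousOn.comp (f := fun x : Esp m => (x, (0 : ℝ))) (by fun_prop)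
        fun x _ => ⟨mem_univ _, le_rfl, hT.le⟩
    refine integral_mono (IG.const_mul α) Iz fun x => ?_
    simp only
    rw [hz0 x]
    by_cases hD : x ∈ D
    · rw [indicator_of_mem hD]
      have := mul_le_mul_of_nonneg_left (ha x hD) (mul_nonneg (hGnn x) (hWnn x 0))
      linarith
    · simp [hG, hD]
  have weight_le : Real.exp (-(κ * T / 2)) * ∫ x in D, f x ^ 2 * (cutoff N (h x) * cutoff N (k x))
      ≤ ∫ x, G x * W x 0 := by
    rw [← integral_const_mul, ← integral_indicator P.isOpen.measurableSet]
    refine integral_mono_of_nonneg (Filter.Eventually.of_forall fun x => ?_) IG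
      (Filter.Eventually.of_forall fun x => ?_)
    · exact indicator_nonneg (fun x _ => mul_nonneg (Real.exp_pos _).le (mul_nonneg (sq_nonneg _)
        (mul_nonneg (cutoff_nonneg _ _) (cutoff_nonneg _ _)))) x
    · simp only
      by_cases hD : x ∈ D
      · rw [indicator_of_mem hD, hG, indicator_of_mem hD]
        have := mul_le_mul_of_nonneg_left (P.le_exitWeight_zero (N := N) hT hδ κ0 hD)
          (sq_nonneg (f x))
        linarith
      · simp [hG, hD]
  set X := ∫ x, G x * W x 0
  set J := ∫ q : Esp m × ℝ, b q.1 * y q.1 q.2 ^ 2 ∂ν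
  set S := ∫ x in D, f x ^ 2 * (cutoff N (h x) * cutoff N (k x))
  have absorbed_le : 1 / μ * ∫ q : Esp m × ℝ, G q.1 * (W q.1 0 * v q.1 q.2 ^ 2) ∂ν ≤ α / 2 * X := by
    have h1 := mul_le_mul_of_nonneg_left source_le (show 0 ≤ 1 / μ by positivity)
    have h2 : 1 / μ * (M₀ ^ 2 * X) = α / 2 * X := by rw [hμ]; field_simp
    linarith
  have weighted_le : X ≤ 2 * B / α * J := by
    have : α / 2 * X ≤ B * J := by linarith
    rw [div_mul_eq_mul_div, le_div_iff₀ hα]; linarith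
  calc S = Real.exp (κ * T / 2) * (Real.exp (-(κ * T / 2)) * S) := by
        rw [← mul_assoc, ← Real.exp_add]; simp
    _ ≤ Real.exp (κ * T / 2) * (2 * B / α * J) :=
        mul_le_mul_of_nonneg_left (weight_le.trans weighted_le) (Real.exp_pos _).le
    _ = _ := by ring

section MixedDerivative

variable {E : Type*} [NormedAddCommGroup E] [NormedSpace ℝ E]
  {u : E → ℝ → ℝ} {A : Set E} {T : ℝ}

/-- If `u` and `∂ₜu` are `C¹` on a cylinder, then the directional derivative of `u` in space is
differentiable in time and its derivative is the directional derivative of `∂ₜu`. -/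
lemma hasDerivAt_fderiv_apply (hA : IsOpen A) (hT : 0 < T)
    (hu : ContDiffOn ℝ 1 (fun q : E × ℝ => u q.1 q.2) (A ×ˢ Icc 0 T))
    (hv : ContDiffOn ℝ 1 (fun q : E × ℝ => deriv (u q.1) q.2) (A ×ˢ Icc 0 T))
    {x : E} {t : ℝ} (hx : x ∈ A) (ht : t ∈ Ioo 0 T) (e : E) :
    HasDerivAt (fun s => fderiv ℝ (fun z => u z s) x e)
      (fderiv ℝ (fun z => deriv (u z) t) x e) t := by
  set v : E → ℝ → ℝ := fun z => deriv (u z) with hvdef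
  set L : ℝ := fderiv ℝ (fun z => v z t) x e with hL
  have eL : ∀ y ∈ A, ∀ s ∈ Icc 0 T,
      fderiv ℝ (fun z => v z s) y e = cylDeriv v A T (y, s) (e, 0) := fun y hy s hs => by
    rw [(hasFDerivAt_space hA hv hy hs).fderiv]; simp
  have hcyl : IsOpen (A ×ˢ Ioo 0 T : Set (E × ℝ)) := hA.prod isOpen_Ioo
  have hcont : ContinuousOn (fun q => cylDeriv v A T q (e, 0)) (A ×ˢ Ioo 0 T) :=
    ((continuousOn_cylDeriv hA hT hv).mono (prod_mono le_rfl Ioo_subset_Icc_self)).clm_apply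
      continuousOn_const
  have hline : Continuous fun r : ℝ × ℝ => (x + r.1 • e, r.2) := by fun_prop
  rw [hasDerivAt_iff_isLittleO, Asymptotics.isLittleO_iff]
  intro η hη
  have hev : ∀ᶠ r : ℝ × ℝ in nhds ((0 : ℝ), t), (x + r.1 • e, r.2) ∈ A ×ˢ Ioo 0 T ∧
      |cylDeriv v A T (x + r.1 • e, r.2) (e, 0) - L| < η := by
    have h1 : (fun r : ℝ × ℝ => (x + r.1 • e, r.2)) ((0 : ℝ), t) = (x, t) := by simp
    have h2 : ∀ᶠ q in nhds (x, t), q ∈ A ×ˢ Ioo 0 T ∧ |cylDeriv v A T q (e, 0) - L| < η := by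
      refine Filter.Eventually.and (hcyl.mem_nhds ⟨hx, ht⟩) ?_
      have h3 := (hcont.continuousAt (hcyl.mem_nhds (show (x, t) ∈ _ from ⟨hx, ht⟩))).eventually
        (Metric.ball_mem_nhds _ hη)
      beta_reduce at h3
      rw [← eL x hx t (Ioo_subset_Icc_self ht)] at h3
      filter_upwards [h3] with q hq
      rwa [← Real.dist_eq]
    rw [← h1] at h2
    exact hline.continuousAt.eventually h2
  obtain ⟨r, hr, hball⟩ := Metric.eventually_nhds_iff_ball.1 hev
  have hball' : ∀ ε ∈ ball (0 : ℝ) r, ∀ s ∈ ball t r, x + ε • e ∈ A ∧ s ∈ Ioo 0 T ∧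
      |cylDeriv v A T (x + ε • e, s) (e, 0) - L| < η := fun ε hε s hs => by
    have h := hball (ε, s) (by rw [← ball_prod_same]; exact ⟨hε, hs⟩)
    exact ⟨h.1.1, h.1.2, h.2⟩
  have hdε : ∀ g : E → ℝ, ∀ y, DifferentiableAt ℝ g (x + y • e) →
      HasDerivAt (fun ε : ℝ => g (x + ε • e)) (fderiv ℝ g (x + y • e) e) y := fun g y hg => by
    have h1 : HasDerivAt (fun ε : ℝ => x + ε • e) e y := by
      simpa using ((hasDerivAt_id y).smul_const e).const_add x
    exact hg.hasFDerivAt.comp_hasDerivAt y h1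
  have h0r : (0 : ℝ) ∈ ball (0 : ℝ) r := mem_ball_self hr
  have htr : t ∈ ball t r := mem_ball_self hr
  have hfirst : ∀ s ∈ ball t r, ∀ ε ∈ ball (0 : ℝ) r,
      ‖(v (x + ε • e) s - ε * L) - v x s‖ ≤ η * ‖ε‖ := by
    intro s hs ε hε
    have h := (convex_ball (0 : ℝ) r).norm_image_sub_le_of_norm_hasDerivWithin_le
      (f := fun ε => v (x + ε • e) s - ε * L)
      (f' := fun ε => cylDeriv v A T (x + ε • e, s) (e, 0) - L) (C := η)
      (fun y hy => by
        obtain ⟨h1, h2, -⟩ := hball' y hy s hs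
        have h3 := hdε (fun z => v z s) y
          (hasFDerivAt_space hA hv h1 (Ioo_subset_Icc_self h2)).differentiableAt
        rw [eL _ h1 s (Ioo_subset_Icc_self h2)] at h3
        exact (h3.sub (hasDerivAt_mul_const L)).hasDerivWithinAt)
      (fun y hy => (hball' y hy s hs).2.2.le) h0r hε
    simpa using h
  have hsecond : ∀ s ∈ ball t r, ∀ ε ∈ ball (0 : ℝ) r,
      ‖(u (x + ε • e) s - u x s - s * (ε * L)) - (u (x + ε • e) t - u x t - t * (ε * L))‖
        ≤ η * ‖ε‖ * ‖s - t‖ := by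
    intro s hs ε hε
    exact (convex_ball t r).norm_image_sub_le_of_norm_hasDerivWithin_le
      (f := fun s => u (x + ε • e) s - u x s - s * (ε * L))
      (f' := fun s => v (x + ε • e) s - v x s - ε * L) (C := η * ‖ε‖)
      (fun y hy => by
        obtain ⟨h1, h2, -⟩ := hball' ε hε y hy
        have h3 := (hasDerivAt_time hA hu h1 h2).differentiableAt.hasDerivAt
        have h4 := (hasDerivAt_time hA hu hx h2).differentiableAt.hasDerivAt
        exact ((h3.sub h4).sub (hasDerivAt_mul_const (ε * L))).hasDerivWithinAt)
      (fun y hy => by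
        have := hfirst y hy ε hε
        rwa [sub_right_comm] at this) htr hs
  filter_upwards [ball_mem_nhds t hr] with s hs
  have hder : HasDerivAt (fun ε : ℝ => (u (x + ε • e) s - u x s - s * (ε * L))
      - (u (x + ε • e) t - u x t - t * (ε * L)))
      ((fderiv ℝ (fun z => u z s) x e - s * L) - (fderiv ℝ (fun z => u z t) x e - t * L)) 0 := by
    have key : ∀ s ∈ Ioo 0 T, HasDerivAt (fun ε : ℝ => u (x + ε • e) s - u x s - s * (ε * L))
        (fderiv ℝ (fun z => u z s) x e - s * L) 0 := fun s hs => by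
      have h3 := hdε (fun z => u z s) 0 (by
        simpa using (hasFDerivAt_space hA hu hx (Ioo_subset_Icc_self hs)).differentiableAt)
      have h4 := (hasDerivAt_mul_const (x := (0 : ℝ)) L).const_mul s
      simp only [zero_smul, add_zero] at h3
      exact (h3.sub_const (u x s)).sub h4
    exact (key s (hball' 0 h0r s hs).2.1).sub (key t ht)
  have hle := hder.le_of_lip' (C := η * ‖s - t‖) (by positivity) (by
    filter_upwards [ball_mem_nhds (0 : ℝ) hr] with ε hε
    have := hsecond s hs ε hε
    simp only [zero_smul, add_zero, zero_mul, mul_zero, sub_self, sub_zero]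
    linarith)
  simp only [smul_eq_mul]
  convert hle using 2
  ring

/-- The time derivative of a solution of a transport equation with time independent
coefficients solves the same equation. -/
lemma transport_deriv (hA : IsOpen A) (hT : 0 < T)
    (hu : ContDiffOn ℝ 1 (fun q : E × ℝ => u q.1 q.2) (A ×ˢ Icc 0 T))
    (hv : ContDiffOn ℝ 1 (fun q : E × ℝ => deriv (u q.1) q.2) (A ×ˢ Icc 0 T))
    {x e : E} {p : ℝ} (hx : x ∈ A)
    (heq : ∀ t ∈ Ioo 0 T, deriv (u x) t + fderiv ℝ (fun z => u z t) x e + p * u x t = 0)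
    {t : ℝ} (ht : t ∈ Ioo 0 T) :
    deriv (deriv (u x)) t + fderiv ℝ (fun z => deriv (u z) t) x e + p * deriv (u x) t = 0 := by
  have h1 := (hasDerivAt_time (z := fun z => deriv (u z)) hA hv hx ht).differentiableAt.hasDerivAt
  have h2 := hasDerivAt_fderiv_apply hA hT hu hv hx ht e
  have h3 := (hasDerivAt_time hA hu hx ht).differentiableAt.hasDerivAt.const_mul p
  refine (((h1.add h2).add h3).congr_of_eventuallyEq ?_).unique (hasDerivAt_const t (0 : ℝ))
  filter_upwards [Ioo_mem_nhds ht.1 ht.2] with s hs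
  exact (heq s hs).symm

/-- A transport equation extends to the initial time by continuity. -/
lemma transport_initial (hA : IsOpen A) (hT : 0 < T)
    (hu : ContDiffOn ℝ 1 (fun q : E × ℝ => u q.1 q.2) (A ×ˢ Icc 0 T))
    (hv : ContDiffOn ℝ 1 (fun q : E × ℝ => deriv (u q.1) q.2) (A ×ˢ Icc 0 T))
    {x e : E} {p : ℝ} (hx : x ∈ A)
    (heq : ∀ t ∈ Ioo 0 T, deriv (u x) t + fderiv ℝ (fun z => u z t) x e + p * u x t = 0) :
    deriv (u x) 0 + fderiv ℝ (fun z => u z 0) x e + p * u x 0 = 0 := by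
  have hmaps : MapsTo (fun t : ℝ => (x, t)) (Icc 0 T) (A ×ˢ Icc 0 T) := fun t ht => ⟨hx, ht⟩
  have hline : ContinuousOn (fun t : ℝ => (x, t)) (Icc 0 T) := by fun_prop
  have hg : ContinuousOn (fun t => deriv (u x) t + fderiv ℝ (fun z => u z t) x e + p * u x t)
      (Icc 0 T) := by
    refine ((hv.continuousOn.comp hline hmaps).add ?_).add
      (continuousOn_const.mul (hu.continuousOn.comp hline hmaps))
    have h := ((continuousOn_cylDeriv hA hT hu).comp hline hmaps).clm_apply
      (continuousOn_const (c := (e, (0 : ℝ))))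
    refine h.congr fun t ht => ?_
    rw [(hasFDerivAt_space hA hu hx ht).fderiv]
    simp
  have hcl : (0 : ℝ) ∈ closure (Ioo 0 T) := by
    rw [closure_Ioo hT.ne]
    exact ⟨le_rfl, hT.le⟩
  have h0 := (hg 0 ⟨le_rfl, hT.le⟩).mono (s := Ioo 0 T) Ioo_subset_Icc_self
  have := mem_closure_iff_nhdsWithin_neBot.1 hcl
  refine tendsto_nhds_unique h0 (tendsto_const_nhds.congr' ?_)
  filter_upwards [self_mem_nhdsWithin] with t ht
  exact (heq t ht).symm

end MixedDerivative

section SupBound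

variable {E : Type*} [PseudoMetricSpace E] {v : E → ℝ → ℝ} {K D : Set E} {T : ℝ}

lemma continuousOn_iSup_abs (hK : IsCompact K) (hDK : D ⊆ K) (hD : D.Nonempty)
    (hv : ContinuousOn (fun q : E × ℝ => v q.1 q.2) (K ×ˢ Icc 0 T)) :
    ContinuousOn (fun t => ⨆ x : D, |v x t|) (Icc 0 T) ∧
      ∀ t ∈ Icc 0 T, BddAbove (range fun x : D => |v x t|) := by
  have hKT : IsCompact (K ×ˢ Icc 0 T) := hK.prod isCompact_Icc
  have : Nonempty D := hD.to_subtype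
  obtain ⟨R, hR⟩ := hKT.exists_bound_of_continuousOn hv
  have hbdd : ∀ t ∈ Icc 0 T, BddAbove (range fun x : D => |v x t|) := by
    rintro t ht
    refine ⟨R, ?_⟩
    rintro _ ⟨x, rfl⟩
    exact hR (x, t) ⟨hDK x.2, ht⟩
  refine ⟨?_, hbdd⟩
  have huc := hKT.uniformContinuousOn_of_continuous hv
  rw [Metric.uniformContinuousOn_iff] at huc
  rw [Metric.continuousOn_iff]
  intro t ht ε hε
  obtain ⟨δ, hδ, h⟩ := huc (ε / 2) (half_pos hε)
  refine ⟨δ, hδ, fun s hs hst => ?_⟩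
  have hclose : ∀ r ∈ Icc 0 T, ∀ r' ∈ Icc 0 T, dist r r' < δ →
      (⨆ x : D, |v x r|) ≤ (⨆ x : D, |v x r'|) + ε / 2 := by
    intro r hr r' hr' hd
    refine ciSup_le fun x => ?_
    have h1 := h (x, r) ⟨hDK x.2, hr⟩ (x, r') ⟨hDK x.2, hr'⟩ 
      (by simpa [Prod.dist_eq] using hd)
    rw [Real.dist_eq] at h1
    have h2 : |v x r'| ≤ ⨆ x : D, |v x r'| := le_ciSup (f := fun x : D => |v x r'|) (hbdd r' hr') x
    have h3 := abs_sub_abs_le_abs_sub (v x r) (v x r')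
    linarith
  have h1 := hclose s hs t ht hst
  have h2 := hclose t ht s hs (by rwa [dist_comm])
  rw [Real.dist_eq, abs_lt]
  constructor <;> linarith

lemma setIntegral_sq_le_of_iSup (hK : IsCompact K) (hDK : D ⊆ K)
    (hv : ContinuousOn (fun q : E × ℝ => v q.1 q.2) (K ×ˢ Icc 0 T)) {x : E} (hx : x ∈ D) :
    ∫ t in Ioo 0 T, v x t ^ 2 ≤ ∫ t in Ioo 0 T, (⨆ z : D, |v z t|) ^ 2 := by
  obtain ⟨hc, hb⟩ := continuousOn_iSup_abs hK hDK ⟨x, hx⟩ hv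
  have hvx : ContinuousOn (v x) (Icc 0 T) :=
    hv.comp (f := fun t : ℝ => (x, t)) (by fun_prop) fun t ht => ⟨hDK hx, ht⟩
  refine setIntegral_mono_on ?_ ?_ measurableSet_Ioo fun t ht => ?_
  · exact ((hvx.pow 2).integrableOn_Icc).mono_set Ioo_subset_Icc_self
  · exact ((hc.pow 2).integrableOn_Icc).mono_set Ioo_subset_Icc_self
  · rw [← sq_abs (v x t)]
    exact pow_le_pow_left₀ (abs_nonneg _) (le_ciSup (f := fun z : D => |v z t|)
      (hb t (Ioo_subset_Icc_self ht)) ⟨x, hx⟩) 2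

end SupBound

section GraphCoordinates

variable (d : ℕ)

/-- The horizontal coordinates `x'` of a point `(x', xₙ)`. -/
def horizontal : Esp (d + 1) →L[ℝ] Esp d :=
  (EuclideanSpace.equiv (Fin d) ℝ).symm.toContinuousLinearMap.comp
    (ContinuousLinearMap.pi fun i : Fin d => EuclideanSpace.proj (𝕜 := ℝ) i.castSucc)

/-- The vertical coordinate `xₙ` of a point `(x', xₙ)`. -/
def vertical : Esp (d + 1) →L[ℝ] ℝ := EuclideanSpace.proj (𝕜 := ℝ) (Fin.last d)

variable {d}

@[simp] lemma horizontal_apply (x : Esp (d + 1)) (i : Fin d) :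
    horizontal d x i = x i.castSucc := rfl

lemma vertical_apply (x : Esp (d + 1)) : vertical d x = x (Fin.last d) := rfl

@[simp] lemma graphMk_castSucc (x' : Esp d) (s : ℝ) (i : Fin d) :
    graphMk d x' s i.castSucc = x' i := by
  change (Fin.snoc (α := fun _ => ℝ) _ s : Fin (d + 1) → ℝ) i.castSucc = _
  rw [Fin.snoc_castSucc]
  rfl

@[simp] lemma graphMk_last (x' : Esp d) (s : ℝ) : graphMk d x' s (Fin.last d) = s := by
  change (Fin.snoc (α := fun _ => ℝ) _ s : Fin (d + 1) → ℝ) (Fin.last d) = _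
  rw [Fin.snoc_last]

@[simp] lemma horizontal_graphMk (x' : Esp d) (s : ℝ) : horizontal d (graphMk d x' s) = x' := by
  ext i; simp

@[simp] lemma vertical_graphMk (x' : Esp d) (s : ℝ) : vertical d (graphMk d x' s) = s := by
  simp [vertical_apply]

@[simp] lemma graphMk_horizontal_vertical (x : Esp (d + 1)) :
    graphMk d (horizontal d x) (vertical d x) = x := by
  ext i
  refine Fin.lastCases ?_ (fun i => ?_) i <;> simp [vertical_apply]

lemma inner_graphMk (z : Esp (d + 1)) (g : Esp d) (s : ℝ) :
    ⟪z, graphMk d g s⟫ = ⟪horizontal d z, g⟫ + vertical d z * s := by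
  simp only [PiLp.inner_apply, Fin.sum_univ_castSucc, graphMk_castSucc, graphMk_last,
    horizontal_apply, vertical_apply]
  simp [mul_comm]

lemma norm_sq_eq_horizontal_vertical (z : Esp (d + 1)) :
    ‖z‖ ^ 2 = ‖horizontal d z‖ ^ 2 + vertical d z ^ 2 := by
  have h := inner_graphMk z (horizontal d z) (vertical d z)
  rw [graphMk_horizontal_vertical, real_inner_self_eq_norm_sq, real_inner_self_eq_norm_sq] at h
  rw [h]; ring

lemma norm_horizontal_le (z : Esp (d + 1)) : ‖horizontal d z‖ ≤ ‖z‖ := by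
  refine le_of_sq_le_sq ?_ (norm_nonneg z)
  rw [norm_sq_eq_horizontal_vertical z]
  nlinarith [sq_nonneg (vertical d z)]

lemma dist_graphMk (x' : Esp d) (s r : ℝ) : dist (graphMk d x' s) (graphMk d x' r) = |s - r| := by
  rw [dist_eq_norm, ← Real.sqrt_sq (norm_nonneg _), norm_sq_eq_horizontal_vertical]
  simp [Real.sqrt_sq_eq_abs]

lemma graphMk_zero : graphMk d 0 0 = 0 := by
  simpa using graphMk_horizontal_vertical (0 : Esp (d + 1))

lemma continuous_graphMk : Continuous fun q : Esp d × ℝ => graphMk d q.1 q.2 := by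
  unfold graphMk
  refine (EuclideanSpace.equiv (Fin (d + 1)) ℝ).symm.continuous.comp ?_
  refine continuous_pi fun i => ?_
  refine Fin.lastCases ?_ (fun i => ?_) i
  · simp only [Fin.snoc_last]; fun_prop
  · simp only [Fin.snoc_castSucc]; fun_prop

variable (d) in
/-- Graph coordinates as a homeomorphism. -/
def graphHomeomorph : Esp d × ℝ ≃ₜ Esp (d + 1) where
  toFun q := graphMk d q.1 q.2
  invFun x := (horizontal d x, vertical d x)
  left_inv q := by simp
  right_inv x := by simp
  continuous_toFun := continuous_graphMk
  continuous_invFun := by fun_prop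

lemma measurePreserving_graphHomeomorph :
    MeasurePreserving (graphHomeomorph d) (volume.prod volume) volume := by
  have h1 := EuclideanSpace.volume_preserving_symm_measurableEquiv_toLp (Fin d)
  have h2 := (volume_preserving_piFinSuccAbove (fun _ : Fin (d + 1) => ℝ) (Fin.last d)).symm
  have h3 := (EuclideanSpace.volume_preserving_symm_measurableEquiv_toLp (Fin (d + 1))).symm
  have h4 := (MeasurePreserving.id (volume : Measure ℝ)).prod h1
  have h5 := (h3.comp (h2.comp h4)).comp (Measure.measurePreserving_swap
    (μ := (volume : Measure (Esp d))) (ν := (volume : Measure ℝ)))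
  have h6 : ⇑(graphHomeomorph d) =
      (⇑(MeasurableEquiv.toLp 2 (Fin (d + 1) → ℝ)).symm.symm ∘
        ⇑(MeasurableEquiv.piFinSuccAbove (fun _ => ℝ) (Fin.last d)).symm ∘
          Prod.map id ⇑(MeasurableEquiv.toLp 2 (Fin d → ℝ)).symm) ∘ Prod.swap := by
    funext q
    ext i
    refine Fin.lastCases ?_ (fun i => ?_) i
    · simp [graphHomeomorph, MeasurableEquiv.piFinSuccAbove]
    · simp [graphHomeomorph, MeasurableEquiv.piFinSuccAbove]
  rw [h6]
  exact h5

end GraphCoordinates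

section GraphGeometry

variable {d : ℕ} {ℓ ℓt : Esp d → ℝ} {ρ : ℝ}

lemma mem_graphDomain {x : Esp (d + 1)} : x ∈ graphDomain d ρ ℓ ℓt ↔
    ‖horizontal d x‖ < ρ ∧ ℓ (horizontal d x) - ℓt (horizontal d x) < vertical d x ∧
      vertical d x < ℓ (horizontal d x) := by
  constructor
  · rintro ⟨x', s, h1, h2, h3, rfl⟩
    simpa using ⟨h1, h2, h3⟩
  · rintro ⟨h1, h2, h3⟩
    exact ⟨_, _, h1, h2, h3, (graphMk_horizontal_vertical x).symm⟩

lemma graphMk_mem_closure {S : Set (Esp (d + 1))} {x' : Esp d} {b : ℝ} (hb : 0 < b)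
    (h : ∀ s ∈ Ioo 0 b, graphMk d x' (ℓ x' - s) ∈ S) : graphMk d x' (ℓ x') ∈ closure S := by
  have h1 : Filter.Tendsto (fun s : ℝ => graphMk d x' (ℓ x' - s)) (nhdsWithin 0 (Ioi 0))
      (nhds (graphMk d x' (ℓ x'))) := by
    have hc : Continuous fun s : ℝ => graphMk d x' (ℓ x' - s) :=
      continuous_graphMk.comp (f := fun s : ℝ => (x', ℓ x' - s)) (by fun_prop)
    have := hc.tendsto 0
    rw [sub_zero] at this
    exact this.mono_left nhdsWithin_le_nhds
  exact mem_closure_of_tendsto h1 (Filter.mem_of_superset (Ioo_mem_nhdsGT hb) h)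

/-- The depth of a point below the graph of `ℓ`. -/
def graphDepth (ℓ : Esp d → ℝ) (x : Esp (d + 1)) : ℝ := ℓ (horizontal d x) - vertical d x

lemma hasFDerivAt_graphDepth {x : Esp (d + 1)} (h : DifferentiableAt ℝ ℓ (horizontal d x)) :
    HasFDerivAt (graphDepth ℓ)
      ((fderiv ℝ ℓ (horizontal d x)).comp (horizontal d) - vertical d) x :=
  (h.hasFDerivAt.comp x (horizontal d).hasFDerivAt).sub (vertical d).hasFDerivAt

/-- The thickness profile of the domain below the graph. -/
def bump (ε ρ : ℝ) (x' : Esp d) : ℝ := ε * (ρ ^ 2 - ‖x'‖ ^ 2) ^ 2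

lemma contDiff_bump (ε ρ : ℝ) {n : WithTop ℕ∞} : ContDiff ℝ n (bump (d := d) ε ρ) :=
  contDiff_const.mul ((contDiff_const.sub (contDiff_norm_sq ℝ)).pow 2)

lemma hasFDerivAt_bump (ε ρ : ℝ) (x' : Esp d) :
    HasFDerivAt (bump ε ρ) ((-(4 * ε * (ρ ^ 2 - ‖x'‖ ^ 2))) • innerSL ℝ x') x' := by
  have h := (((hasStrictFDerivAt_norm_sq x').hasFDerivAt.const_sub (ρ ^ 2)).pow 2).const_mul ε
  refine h.congr_fderiv ?_
  ext e
  simp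
  ring

lemma bump_pos {ε : ℝ} (hε : 0 < ε) {x' : Esp d} (hx : ‖x'‖ < ρ) : 0 < bump ε ρ x' := by
  have : 0 < ρ ^ 2 - ‖x'‖ ^ 2 := by nlinarith [norm_nonneg x']
  unfold bump; positivity

lemma bump_le {ε : ℝ} (hε : 0 < ε) (hρ : ρ ≤ 1) {x' : Esp d} (hx : ‖x'‖ < ρ) :
    bump ε ρ x' ≤ ε := by
  have h0 : 0 ≤ ρ ^ 2 - ‖x'‖ ^ 2 := by nlinarith [norm_nonneg x']
  have h1 : ρ ^ 2 - ‖x'‖ ^ 2 ≤ 1 := by nlinarith [norm_nonneg x']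
  have h2 : (ρ ^ 2 - ‖x'‖ ^ 2) ^ 2 ≤ 1 := pow_le_one₀ h0 h1
  unfold bump; nlinarith

lemma bump_boundary (ε : ℝ) {x' : Esp d} (hx : ‖x'‖ = ρ) :
    bump ε ρ x' = 0 ∧ gradient (bump ε ρ) x' = 0 := by
  refine ⟨by simp [bump, hx], ?_⟩
  rw [gradient, (hasFDerivAt_bump ε ρ x').fderiv]
  simp [hx]

lemma abs_fderiv_bump_le {ε : ℝ} (hε : 0 < ε) (hρ : ρ ≤ 1) {x' : Esp d} (hx : ‖x'‖ < ρ)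
    (e : Esp d) : |fderiv ℝ (bump ε ρ) x' e| ≤ 4 * ε * ‖e‖ := by
  have h0 : 0 ≤ ρ ^ 2 - ‖x'‖ ^ 2 := by nlinarith [norm_nonneg x']
  have h1 : ρ ^ 2 - ‖x'‖ ^ 2 ≤ 1 := by nlinarith [norm_nonneg x']
  have h2 : |⟪x', e⟫| ≤ 1 * ‖e‖ :=
    (abs_real_inner_le_norm x' e).trans (by gcongr; exact (hx.le.trans hρ))
  rw [(hasFDerivAt_bump ε ρ x').fderiv]
  simp only [smul_apply, innerSL_apply_apply, smul_eq_mul, abs_mul, abs_neg,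
    abs_of_nonneg h0, abs_of_pos hε]
  rw [show |(4 : ℝ)| = 4 by norm_num]
  calc 4 * ε * (ρ ^ 2 - ‖x'‖ ^ 2) * |⟪x', e⟫| ≤ 4 * ε * 1 * (1 * ‖e‖) := by gcongr
    _ = 4 * ε * ‖e‖ := by ring

/-- Existence of a thin domain below the graph on which the field exits through the graph. -/
lemma exists_isExitPair {T ρ₀ M δ₀ c : ℝ} (hT : 0 < T) (hρ₀ : 0 < ρ₀) (hM : 0 < M)
    (hδ₀ : 0 < δ₀) (hc : 0 < c) (hℓ : ContDiffOn ℝ 2 ℓ (closedBall 0 ρ₀)) (hℓ0 : ℓ 0 = 0)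
    {U : Set (Esp (d + 1))} (hU : IsOpen U) (h0U : (0 : Esp (d + 1)) ∈ U)
    {H : Esp (d + 1) → Esp (d + 1)} (hH : ContDiffOn ℝ 1 H U) (hHM : ∀ x ∈ U, ‖H x‖ ≤ M)
    (hH0 : δ₀ < ⟪H 0, nuUp d ℓ 0⟫) :
    ∃ ρ₁ ∈ Ioo 0 ρ₀, ∃ ε > 0, ε < c ∧ ρ₁ ≤ 1 ∧ ∃ B > 0,
      graphDomain d ρ₁ ℓ (bump ε ρ₁) ⊆ U ∧
      IsExitPair (graphDomain d ρ₁ ℓ (bump ε ρ₁)) H (graphDepth ℓ)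
        (fun x => bump ε ρ₁ (horizontal d x) - graphDepth ℓ x) T δ₀ B := by
  have hℓo : ContDiffOn ℝ 2 ℓ (ball 0 ρ₀) := hℓ.mono ball_subset_closedBall
  have hℓd : ∀ x' ∈ ball (0 : Esp d) ρ₀, DifferentiableAt ℝ ℓ x' := fun x' hx' =>
    (hℓo.differentiableOn two_ne_zero).differentiableAt (isOpen_ball.mem_nhds hx')
  have h0b : (0 : Esp d) ∈ ball (0 : Esp d) ρ₀ := mem_ball_self hρ₀
  set φ : Esp (d + 1) → ℝ := fun x =>
    fderiv ℝ ℓ (horizontal d x) (horizontal d (H x)) - vertical d (H x) with hφ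
  have hφ0 : φ 0 < -δ₀ := by
    have h1 : ⟪H 0, graphMk d (-(gradient ℓ 0)) 1⟫ = - φ 0 := by
      rw [inner_graphMk, inner_neg_right, hφ, real_inner_comm]
      simp [gradient, InnerProductSpace.toDual_symm_apply]
      ring
    have hs : 1 ≤ Real.sqrt (1 + ‖gradient ℓ 0‖ ^ 2) := by
      rw [Real.one_le_sqrt]; nlinarith [sq_nonneg ‖gradient ℓ 0‖]
    rw [nuUp, inner_smul_right, h1, ← div_eq_inv_mul, lt_div_iff₀ (by linarith)] at hH0
    nlinarith
  have hHc : ContinuousAt H 0 := hH.continuousOn.continuousAt (hU.mem_nhds h0U)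
  have hφc : ContinuousAt φ 0 := by
    have h1 : ContinuousAt (fderiv ℝ ℓ) (horizontal d 0) := by
      rw [map_zero]
      exact (hℓo.continuousOn_fderiv_of_isOpen isOpen_ball one_le_two).continuousAt
        (isOpen_ball.mem_nhds h0b)
    have h2 : ContinuousAt (fun x => fderiv ℝ ℓ (horizontal d x)) 0 :=
      ContinuousAt.comp (f := horizontal d) h1 (horizontal d).continuous.continuousAt
    exact (h2.clm_apply ((horizontal d).continuous.continuousAt.comp hHc)).sub
      ((vertical d).continuous.continuousAt.comp hHc)
  set B : ℝ := 1 - φ 0 with hB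
  have hev : ∀ᶠ x in nhds (0 : Esp (d + 1)), x ∈ U ∧ φ x < -δ₀ ∧ -B < φ x :=
    Filter.Eventually.and (hU.mem_nhds h0U)
      ((hφc.eventually_lt_const hφ0).and (hφc.eventually_const_lt (by simp [hB])))
  obtain ⟨r, hr, hball⟩ := Metric.eventually_nhds_iff_ball.1 hev
  have hℓc : ContinuousAt ℓ 0 := (hℓd 0 h0b).continuousAt
  have hev2 : ∀ᶠ x' in nhds (0 : Esp d), |ℓ x'| < r / 4 := by
    have := hℓc.abs.eventually_lt_const (u := r / 4) (by simp [hℓ0, hr])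
    exact this
  obtain ⟨r₁, hr₁, hball₁⟩ := Metric.eventually_nhds_iff_ball.1 hev2
  set ρ₁ : ℝ := min (min (ρ₀ / 2) 1) (min (r / 2) r₁) with hρ₁
  have ρ₁0 : 0 < ρ₁ := by positivity
  have ρ₁1 : ρ₁ ≤ 1 := (min_le_left _ _).trans (min_le_right _ _)
  have ρ₁ρ : ρ₁ ≤ ρ₀ / 2 := (min_le_left _ _).trans (min_le_left _ _)
  have ρ₁r : ρ₁ ≤ r / 2 := (min_le_right _ _).trans (min_le_left _ _)
  have ρ₁r₁ : ρ₁ ≤ r₁ := (min_le_right _ _).trans (min_le_right _ _)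
  set ε : ℝ := min (min (c / 2) (δ₀ * T / 2)) (min (r / 4) (δ₀ / (4 * M))) with hε
  have ε0 : 0 < ε := by positivity
  have εc : ε ≤ c / 2 := (min_le_left _ _).trans (min_le_left _ _)
  have εT : ε ≤ δ₀ * T / 2 := (min_le_left _ _).trans (min_le_right _ _)
  have εr : ε ≤ r / 4 := (min_le_right _ _).trans (min_le_left _ _)
  have εM : 4 * ε * M ≤ δ₀ := by
    have : ε ≤ δ₀ / (4 * M) := (min_le_right _ _).trans (min_le_right _ _)
    rw [le_div_iff₀ (by positivity)] at this
    linarith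
  set D := graphDomain d ρ₁ ℓ (bump ε ρ₁) with hD
  have hDball : D ⊆ ball 0 r := fun x hx => by
    obtain ⟨h1, h2, h3⟩ := mem_graphDomain.1 hx
    have h4 := hball₁ (horizontal d x) (by simpa using h1.trans_le ρ₁r₁)
    have h5 := bump_le ε0 ρ₁1 h1
    rw [abs_lt] at h4
    have h6 : |vertical d x| < r / 2 := by
      rw [abs_lt]; constructor <;> linarith
    have h7 : ‖x‖ ^ 2 < r ^ 2 := by
      rw [norm_sq_eq_horizontal_vertical x, ← sq_abs (vertical d x)]
      nlinarith [norm_nonneg (horizontal d x), abs_nonneg (vertical d x)]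
    simpa using lt_of_pow_lt_pow_left₀ 2 hr.le h7
  have hDρ : ∀ x ∈ D, horizontal d x ∈ ball (0 : Esp d) ρ₀ := fun x hx => by
    have := (mem_graphDomain.1 hx).1
    rw [mem_ball_zero_iff]; linarith
  have hkderiv : ∀ x ∈ D, fderiv ℝ (graphDepth ℓ) x (H x) = φ x := fun x hx => by
    rw [(hasFDerivAt_graphDepth (hℓd _ (hDρ x hx))).fderiv]; simp [hφ]
  have hhderiv : ∀ x ∈ D,
      fderiv ℝ (fun x => bump ε ρ₁ (horizontal d x) - graphDepth ℓ x) x (H x)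
        = fderiv ℝ (bump ε ρ₁) (horizontal d x) (horizontal d (H x)) - φ x := fun x hx => by
    have h1 := (hasFDerivAt_graphDepth (hℓd _ (hDρ x hx)))
    have h2 := ((hasFDerivAt_bump ε ρ₁ (horizontal d x)).comp x (horizontal d).hasFDerivAt)
    have h3 := h2.sub h1
    have h4 : fderiv ℝ (fun x => bump ε ρ₁ (horizontal d x) - graphDepth ℓ x) x = _ := h3.fderiv
    rw [h4, (hasFDerivAt_bump ε ρ₁ (horizontal d x)).fderiv]
    simp [hφ]
  set A : Set (Esp (d + 1)) := horizontal d ⁻¹' closedBall 0 ρ₁ with hA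
  have hAρ : MapsTo (horizontal d) A (closedBall 0 ρ₀) := fun x hx => by
    have : ‖horizontal d x‖ ≤ ρ₁ := by simpa [hA] using hx
    rw [mem_closedBall_zero_iff]; linarith
  have hkA : ContDiffOn ℝ 1 (graphDepth ℓ) A :=
    ((hℓ.of_le one_le_two).comp (horizontal d).contDiff.contDiffOn hAρ).sub
      (vertical d).contDiff.contDiffOn
  have hhA : ContDiffOn ℝ 1 (fun x => bump ε ρ₁ (horizontal d x) - graphDepth ℓ x) A :=
    ((contDiff_bump ε ρ₁).comp (horizontal d).contDiff).contDiffOn.sub hkA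
  have hDA : D ⊆ A := fun x hx => by simpa [hA] using (mem_graphDomain.1 hx).1.le
  have hDmem : ∀ x, x ∈ D ↔ ‖horizontal d x‖ < ρ₁ ∧ 0 < graphDepth ℓ x ∧
      0 < bump ε ρ₁ (horizontal d x) - graphDepth ℓ x := fun x => by
    rw [hD, mem_graphDomain, graphDepth]
    constructor
    · rintro ⟨h1, h2, h3⟩; exact ⟨h1, by linarith, by linarith⟩
    · rintro ⟨h1, h2, h3⟩; exact ⟨h1, by linarith, by linarith⟩
  have hφD : ∀ x ∈ D, x ∈ U ∧ φ x < -δ₀ ∧ -B < φ x := fun x hx => hball x (hDball hx)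
  refine ⟨ρ₁, ⟨ρ₁0, by linarith⟩, ε, ε0, by linarith, ρ₁1, B, by linarith,
    fun x hx => (hφD x hx).1, ?_⟩
  refine
    { isOpen := ?_
      contDiffOn_field := hH.mono fun x hx => (hφD x hx).1
      contDiffOn_exit := hkA.mono hDA
      contDiffOn_entry := hhA.mono hDA
      exit_le := fun x hx => ?_
      exit_pos := fun x hx => ((hDmem x).1 hx).2.1
      entry_pos := fun x hx => ((hDmem x).1 hx).2.2
      fderiv_exit_le := fun x hx => by rw [hkderiv x hx]; exact (hφD x hx).2.1.le
      le_fderiv_exit := fun x hx => by rw [hkderiv x hx]; exact (hφD x hx).2.2.le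
      fderiv_entry_nonneg := fun x hx => ?_
      isCompact_core := fun σ hσ => ?_ }
  · set O : Set (Esp (d + 1)) := horizontal d ⁻¹' ball 0 ρ₁ with hO
    have hOo : IsOpen O := isOpen_ball.preimage (horizontal d).continuous
    have hOA : O ⊆ A := preimage_mono ball_subset_closedBall
    have h1 := (hkA.continuousOn.mono hOA).isOpen_inter_preimage hOo (isOpen_Ioi (a := (0 : ℝ)))
    have h2 := (hhA.continuousOn.mono hOA).isOpen_inter_preimage hOo (isOpen_Ioi (a := (0 : ℝ)))
    refine (congrArg IsOpen (Set.ext fun x => ?_)).mpr (h1.inter h2)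
    rw [hDmem]
    simp only [hO, mem_inter_iff, mem_preimage, mem_ball_zero_iff, mem_Ioi]
    tauto
  · have h1 := (hDmem x).1 hx
    have h2 := bump_le ε0 ρ₁1 h1.1
    linarith [h1.2.2]
  · rw [hhderiv x hx]
    have h1 := abs_fderiv_bump_le ε0 ρ₁1 ((hDmem x).1 hx).1 (horizontal d (H x))
    have h2 : ‖horizontal d (H x)‖ ≤ M := (norm_horizontal_le _).trans (hHM x (hφD x hx).1)
    have h3 : 4 * ε * ‖horizontal d (H x)‖ ≤ 4 * ε * M := by gcongr
    have h4 := (abs_le.1 h1).1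
    linarith [(hφD x hx).2.1]
  · have hAc : IsClosed A := isClosed_closedBall.preimage (horizontal d).continuous
    have h1 := hkA.continuousOn.preimage_isClosed_of_isClosed hAc (isClosed_Ici (a := σ))
    have h2 := hhA.continuousOn.preimage_isClosed_of_isClosed hAc (isClosed_Ici (a := σ))
    refine Metric.isCompact_of_isClosed_isBounded ?_
      (isBounded_ball.subset fun x hx => hDball hx.1)
    convert h1.inter h2 using 1
    ext x
    simp only [mem_ofPred_eq, mem_inter_iff, mem_preimage, mem_Ici]
    constructor
    · rintro ⟨hx, hk, hh⟩
      exact ⟨⟨hDA hx, hk⟩, hDA hx, hh⟩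
    · rintro ⟨⟨hx, hk⟩, -, hh⟩
      refine ⟨(hDmem x).2 ⟨?_, by linarith, by linarith⟩, hk, hh⟩
      have hle : ‖horizontal d x‖ ≤ ρ₁ := by simpa [hA] using hx
      refine lt_of_le_of_ne hle fun heq => ?_
      have := (bump_boundary ε heq).1
      linarith

end GraphGeometry

lemma integrable_cutoffDeriv {N : ℝ} (hN : 0 < N) : Integrable (cutoffDeriv N) :=
  integrable_of_eq_zero_off_compact (isCompact_Icc (a := 1 / N) (b := 2 / N))
    (continuous_cutoffDeriv N).continuousOn fun r hr => by
      by_cases h : r < 1 / N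
      · exact cutoffDeriv_eq_zero hN h
      · refine cutoffDeriv_eq_zero_of_le hN (le_of_lt ?_)
        by_contra h2
        exact hr ⟨not_lt.1 h, not_lt.1 h2⟩

lemma cutoff_eq_one {N r : ℝ} (hN : 0 < N) (hr : 2 / N ≤ r) : cutoff N r = 1 := by
  refine Real.smoothTransition.one_of_one_le ?_
  rw [div_le_iff₀ hN] at hr
  linarith

lemma integral_cutoffDeriv {N : ℝ} (hN : 0 < N) : ∫ r, cutoffDeriv N r = 1 := by
  have h0 : Filter.Tendsto (cutoff N) Filter.atBot (nhds 0) := by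
    refine tendsto_const_nhds.congr' ?_
    filter_upwards [Filter.eventually_lt_atBot (1 / N)] with r hr
    exact (cutoff_eq_zero hN hr).symm
  have h1 : Filter.Tendsto (cutoff N) Filter.atTop (nhds 1) := by
    refine tendsto_const_nhds.congr' ?_
    filter_upwards [Filter.eventually_ge_atTop (2 / N)] with r hr
    exact (cutoff_eq_one hN hr).symm
  simpa using integral_of_hasDerivAt_of_tendsto (fun r => hasDerivAt_cutoff N r)
    (integrable_cutoffDeriv hN) h0 h1

section BoundaryLayer

variable {d : ℕ} {ℓ ℓt : Esp d → ℝ} {ρ : ℝ}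

lemma measurePreserving_graphDepth (hℓ : Measurable ℓ) :
    MeasurePreserving (fun x : Esp (d + 1) => (horizontal d x, graphDepth ℓ x)) volume
      (volume.prod volume) := by
  have h1 : MeasurePreserving (graphHomeomorph d).symm volume (volume.prod volume) :=
    MeasurePreserving.symm (graphHomeomorph d).toMeasurableEquiv measurePreserving_graphHomeomorph
  have h2 : MeasurePreserving (fun q : Esp d × ℝ => (id q.1, (fun x' s => ℓ x' - s) q.1 q.2))
      (volume.prod volume) (volume.prod volume) :=
    (MeasurePreserving.id _).skew_product (g := fun x' s => ℓ x' - s)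
      (by unfold Function.uncurry; fun_prop)
      (Filter.Eventually.of_forall fun x' => (volume.measurePreserving_sub_left (ℓ x')).map_eq)
  exact h2.comp h1

/-- Concentration of the boundary layer integral on the graph. -/
lemma exists_boundaryLayer_le {T : ℝ} {K : Set (Esp (d + 1))} (hK : IsCompact K)
    (hDK : graphDomain d ρ ℓ ℓt ⊆ K) (hΓ : ∀ x' ∈ ball (0 : Esp d) ρ, graphMk d x' (ℓ x') ∈ K)
    (hℓ : ContinuousOn ℓ (ball 0 ρ)) {g : Esp (d + 1) → ℝ → ℝ}
    (hg : ContinuousOn (fun q : Esp (d + 1) × ℝ => g q.1 q.2) (K ×ˢ Icc 0 T))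
    (hg0 : ∀ x t, 0 ≤ g x t) (h : Esp (d + 1) → ℝ)
    (hY : Integrable (fun q : Esp d × ℝ => g (graphMk d q.1 (ℓ q.1)) q.2)
      ((volume.restrict (ball 0 ρ)).prod (volume.restrict (Ioo 0 T)))) {e : ℝ} (he : 0 < e) :
    ∃ N₀ > 0, ∀ N ≥ N₀, Integrable (fun q : Esp (d + 1) × ℝ => (graphDomain d ρ ℓ ℓt).indicator
        (fun x => cutoff N (h x) * cutoffDeriv N (graphDepth ℓ x)) q.1 * g q.1 q.2)
        (volume.prod (volume.restrict (Ioo 0 T))) →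
      ∫ q : Esp (d + 1) × ℝ, (graphDomain d ρ ℓ ℓt).indicator
        (fun x => cutoff N (h x) * cutoffDeriv N (graphDepth ℓ x)) q.1 * g q.1 q.2
        ∂(volume.prod (volume.restrict (Ioo 0 T))) ≤
      ∫ q : Esp d × ℝ, (g (graphMk d q.1 (ℓ q.1)) q.2 + e)
        ∂((volume.restrict (ball 0 ρ)).prod (volume.restrict (Ioo 0 T))) := by
  have hKT : IsCompact (K ×ˢ Icc 0 T) := hK.prod isCompact_Icc
  have huc := hKT.uniformContinuousOn_of_continuous hg
  rw [Metric.uniformContinuousOn_iff] at huc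
  obtain ⟨η, hη, huc⟩ := huc e he
  refine ⟨2 / η, by positivity, fun N hN hF => ?_⟩
  have hN0 : 0 < N := lt_of_lt_of_le (by positivity) hN
  have hNη : 2 / N ≤ η := by
    rw [ge_iff_le, div_le_iff₀ hη] at hN
    rw [div_le_iff₀ hN0]; linarith
  have : IsFiniteMeasure (volume.restrict (ball (0 : Esp d) ρ)) :=
    ⟨by simpa using measure_ball_lt_top⟩
  have hYe : Integrable (fun q : Esp d × ℝ => g (graphMk d q.1 (ℓ q.1)) q.2 + e)
      ((volume.restrict (ball 0 ρ)).prod (volume.restrict (Ioo 0 T))) :=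
    hY.add (integrable_const e)
  set G : Esp d → ℝ := (ball 0 ρ).indicator
    fun x' => ∫ t in Ioo 0 T, (g (graphMk d x' (ℓ x')) t + e) with hG
  have hGi : Integrable G := by
    rw [hG, integrable_indicator_iff measurableSet_ball]
    exact hYe.integral_prod_left
  have hG0 : ∀ x', 0 ≤ G x' := fun x' =>
    indicator_nonneg (fun x' _ => integral_nonneg fun t => add_nonneg (hg0 _ _) he.le) x'
  set ℓ' : Esp d → ℝ := (ball 0 ρ).indicator ℓ with hℓ'
  have hℓ'm : Measurable ℓ' := by
    classical
    rw [hℓ', ← piecewise_eq_indicator]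
    exact hℓ.measurable_piecewise continuousOn_const measurableSet_ball
  set R : Esp (d + 1) → Esp d × ℝ := fun x => (horizontal d x, graphDepth ℓ' x) with hR
  have hRm : MeasurePreserving R volume (volume.prod volume) := measurePreserving_graphDepth hℓ'm
  have hprod : Integrable (fun q : Esp d × ℝ => G q.1 * cutoffDeriv N q.2)
      (volume.prod volume) := hGi.mul_prod (integrable_cutoffDeriv hN0)
  have hΦi : Integrable (fun x => G (R x).1 * cutoffDeriv N (R x).2) :=
    (hRm.integrable_comp hprod.aestronglyMeasurable).2 hprod
  have hΦ : ∫ x, G (R x).1 * cutoffDeriv N (R x).2 = ∫ x', G x' := by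
    have h1 := integral_map (μ := volume) hRm.aemeasurable
      (f := fun q : Esp d × ℝ => G q.1 * cutoffDeriv N q.2)
      (by rw [hRm.map_eq]; exact hprod.aestronglyMeasurable)
    rw [← h1, hRm.map_eq, integral_prod_mul, integral_cutoffDeriv hN0, mul_one]
  rw [integral_prod _ hYe, integral_prod _ hF, ← integral_indicator measurableSet_ball, ← hG, ← hΦ]
  refine integral_mono hF.integral_prod_left hΦi fun x => ?_
  have hc0 := cutoffDeriv_nonneg hN0 (R x).2
  by_cases hx : x ∈ graphDomain d ρ ℓ ℓt
  · obtain ⟨h1, h2, h3⟩ := mem_graphDomain.1 hx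
    have hxb : horizontal d x ∈ ball (0 : Esp d) ρ := by simpa using h1
    have hdep : graphDepth ℓ' x = graphDepth ℓ x := by
      simp only [graphDepth, hℓ', indicator_of_mem hxb]
    have hR2 : (R x).2 = graphDepth ℓ x := hdep
    simp only [indicator_of_mem hx, integral_const_mul]
    rw [hR2] at hc0 ⊢
    by_cases hk : 2 / N ≤ graphDepth ℓ x
    · simp [cutoffDeriv_eq_zero_of_le hN0 hk]
    have hGx : G (R x).1 = ∫ t in Ioo 0 T,
        (g (graphMk d (horizontal d x) (ℓ (horizontal d x))) t + e) := by
      simp only [hG, hR, indicator_of_mem hxb]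
    have hsec : ∀ z ∈ K, IntegrableOn (g z) (Ioo 0 T) := fun z hz =>
      ((hg.comp (f := fun t : ℝ => (z, t)) (by fun_prop)
        fun t ht => ⟨hz, ht⟩).integrableOn_Icc).mono_set Ioo_subset_Icc_self
    have hle : ∫ t in Ioo 0 T, g x t ≤ G (R x).1 := by
      rw [hGx]
      refine setIntegral_mono_on (hsec x (hDK hx)) ((hsec _ (hΓ _ hxb)).add (integrable_const e))
        measurableSet_Ioo fun t ht => ?_
      have ht' := Ioo_subset_Icc_self ht
      have hd : dist x (graphMk d (horizontal d x) (ℓ (horizontal d x))) < η := by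
        conv_lhs => rw [← graphMk_horizontal_vertical x]
        simp only [horizontal_graphMk, dist_graphMk]
        rw [abs_sub_comm, abs_of_pos (by linarith)]
        exact (not_le.1 hk).trans_le hNη
      have h4 := huc (x, t) ⟨hDK hx, ht'⟩ (graphMk d (horizontal d x) (ℓ (horizontal d x)), t)
        ⟨hΓ _ hxb, ht'⟩
        (by simpa [Prod.dist_eq, hη] using hd)
      rw [Real.dist_eq] at h4
      linarith [(abs_lt.1 h4).2]
    calc cutoff N (h x) * cutoffDeriv N (graphDepth ℓ x) * ∫ t in Ioo 0 T, g x t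
        ≤ 1 * cutoffDeriv N (graphDepth ℓ x) * G (R x).1 := by
          have := integral_nonneg (μ := volume.restrict (Ioo 0 T)) (f := g x) fun t => hg0 x t
          gcongr
          exact cutoff_le_one _ _
      _ = G (R x).1 * cutoffDeriv N (graphDepth ℓ x) := by ring
  · simp only [indicator_of_notMem hx, zero_mul, integral_zero]
    exact mul_nonneg (hG0 _) hc0

end BoundaryLayer

section GraphTrace

variable {d : ℕ} {ℓ : Esp d → ℝ} {ρ : ℝ}

lemma integrable_graph_trace {T : ℝ} {K : Set (Esp (d + 1))} (hK : IsCompact K)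
    (hΓ : ∀ x' ∈ ball (0 : Esp d) ρ, graphMk d x' (ℓ x') ∈ K)
    (hℓ : ContinuousOn ℓ (ball 0 ρ)) {g : Esp (d + 1) → ℝ → ℝ}
    (hg : ContinuousOn (fun q : Esp (d + 1) × ℝ => g q.1 q.2) (K ×ˢ Icc 0 T)) :
    Integrable (fun q : Esp d × ℝ => g (graphMk d q.1 (ℓ q.1)) q.2)
      ((volume.restrict (ball 0 ρ)).prod (volume.restrict (Ioo 0 T))) := by
  obtain ⟨R, hR⟩ := (hK.prod isCompact_Icc).exists_bound_of_continuousOn hg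
  have hmaps : MapsTo (fun q : Esp d × ℝ => (graphMk d q.1 (ℓ q.1), q.2))
      (ball 0 ρ ×ˢ Ioo 0 T) (K ×ˢ Icc 0 T) := fun q hq => ⟨hΓ _ hq.1, Ioo_subset_Icc_self hq.2⟩
  have hcont : ContinuousOn (fun q : Esp d × ℝ => g (graphMk d q.1 (ℓ q.1)) q.2)
      (ball 0 ρ ×ˢ Ioo 0 T) := by
    refine hg.comp (ContinuousOn.prodMk ?_ continuousOn_snd) hmaps
    exact continuous_graphMk.comp_continuousOn
      (continuousOn_fst.prodMk (hℓ.comp continuousOn_fst fun q hq => hq.1))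
  have hmeas : MeasurableSet (ball (0 : Esp d) ρ ×ˢ Ioo 0 T) :=
    measurableSet_ball.prod measurableSet_Ioo
  have : IsFiniteMeasure (volume.restrict (ball (0 : Esp d) ρ)) :=
    ⟨by simpa using measure_ball_lt_top⟩
  refine Integrable.of_bound ?_ R ?_ <;> rw [Measure.prod_restrict]
  · exact hcont.aestronglyMeasurable hmeas
  · filter_upwards [ae_restrict_mem hmeas] with q hq using hR _ (hmaps hq)

lemma one_le_omegaW (ℓ : Esp d → ℝ) (x' : Esp d) : 1 ≤ omegaW d ℓ x' := by
  rw [omegaW, Real.one_le_sqrt]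
  nlinarith [sq_nonneg ‖gradient ℓ x'‖]

lemma continuousOn_omegaW (hℓ : ContDiffOn ℝ 2 ℓ (closedBall 0 ρ)) :
    ContinuousOn (omegaW d ℓ) (ball 0 ρ) := by
  have h1 : ContinuousOn (fderiv ℝ ℓ) (ball 0 ρ) :=
    (hℓ.mono ball_subset_closedBall).continuousOn_fderiv_of_isOpen isOpen_ball one_le_two
  have h2 : ContinuousOn (gradient ℓ) (ball 0 ρ) :=
    (InnerProductSpace.toDual ℝ (Esp d)).symm.continuous.comp_continuousOn h1
  exact (continuousOn_const.add (h2.norm.pow 2)).sqrt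

lemma exists_omegaW_le (hρ : 0 < ρ) (hℓ : ContDiffOn ℝ 2 ℓ (closedBall 0 ρ)) :
    ∃ W, ∀ x' ∈ ball (0 : Esp d) ρ, omegaW d ℓ x' ≤ W := by
  have huniq : UniqueDiffOn ℝ (closedBall (0 : Esp d) ρ) :=
    uniqueDiffOn_convex (convex_closedBall 0 ρ) (by
      rw [interior_closedBall _ hρ.ne']; exact ⟨0, mem_ball_self hρ⟩)
  obtain ⟨R, hR⟩ := (isCompact_closedBall (0 : Esp d) ρ).exists_bound_of_continuousOn
    (hℓ.continuousOn_fderivWithin huniq one_le_two)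
  refine ⟨Real.sqrt (1 + R ^ 2), fun x' hx' => Real.sqrt_le_sqrt ?_⟩
  have h1 : ‖gradient ℓ x'‖ ≤ R := by
    have h2 := hR x' (ball_subset_closedBall hx')
    rw [fderivWithin_of_mem_nhds (Filter.mem_of_superset (isOpen_ball.mem_nhds hx')
      ball_subset_closedBall)] at h2
    simpa [gradient] using h2
  gcongr

lemma integral_graph_trace_le {T ρ₁ : ℝ} {K : Set (Esp (d + 1))} (hK : IsCompact K) (hρ : 0 < ρ)
    (hρ₁ : ρ₁ ≤ ρ) (hΓ : ∀ x' ∈ ball (0 : Esp d) ρ, graphMk d x' (ℓ x') ∈ K)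
    (hℓ : ContDiffOn ℝ 2 ℓ (closedBall 0 ρ)) {g : Esp (d + 1) → ℝ → ℝ} (hg0 : ∀ x t, 0 ≤ g x t)
    (hg : ContinuousOn (fun q : Esp (d + 1) × ℝ => g q.1 q.2) (K ×ˢ Icc 0 T)) :
    ∫ q : Esp d × ℝ, g (graphMk d q.1 (ℓ q.1)) q.2
        ∂((volume.restrict (ball 0 ρ₁)).prod (volume.restrict (Ioo 0 T))) ≤
      ∫ t in Ioo 0 T, ∫ x' in ball (0 : Esp d) ρ, g (graphMk d x' (ℓ x')) t * omegaW d ℓ x' := by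
  set π : Measure (Esp d × ℝ) :=
    (volume.restrict (ball 0 ρ)).prod (volume.restrict (Ioo 0 T)) with hπ
  have hπr : π = volume.restrict (ball 0 ρ ×ˢ Ioo 0 T) := by
    rw [hπ, Measure.prod_restrict, Measure.volume_eq_prod]
  have hmeas : MeasurableSet (ball (0 : Esp d) ρ ×ˢ Ioo 0 T) :=
    measurableSet_ball.prod measurableSet_Ioo
  have hℓc : ContinuousOn ℓ (ball 0 ρ) := hℓ.continuousOn.mono ball_subset_closedBall
  have hY := integrable_graph_trace hK hΓ hℓc hg
  obtain ⟨W, hW⟩ := exists_omegaW_le hρ hℓ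
  have hω : AEStronglyMeasurable (fun q : Esp d × ℝ => omegaW d ℓ q.1) π := by
    rw [hπr]
    exact ((continuousOn_omegaW hℓ).comp continuousOn_fst
      fun q hq => hq.1).aestronglyMeasurable hmeas
  have hYω : Integrable (fun q : Esp d × ℝ => g (graphMk d q.1 (ℓ q.1)) q.2 * omegaW d ℓ q.1) π := by
    refine hY.mul_bdd (c := W) hω ?_
    rw [hπr]
    filter_upwards [ae_restrict_mem hmeas] with q hq
    rw [Real.norm_of_nonneg (zero_le_one.trans (one_le_omegaW ℓ q.1))]
    exact hW _ hq.1
  have h1 : ∫ q : Esp d × ℝ, g (graphMk d q.1 (ℓ q.1)) q.2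
        ∂((volume.restrict (ball 0 ρ₁)).prod (volume.restrict (Ioo 0 T))) ≤
      ∫ q, g (graphMk d q.1 (ℓ q.1)) q.2 ∂π := by
    refine integral_mono_measure ?_ (Filter.Eventually.of_forall fun q => hg0 _ _) hY
    exact Measure.prod_mono (Measure.restrict_mono (ball_subset_ball hρ₁) le_rfl) le_rfl
  have h2 : ∫ q, g (graphMk d q.1 (ℓ q.1)) q.2 ∂π ≤
      ∫ q, g (graphMk d q.1 (ℓ q.1)) q.2 * omegaW d ℓ q.1 ∂π :=
    integral_mono hY hYω fun q => le_mul_of_one_le_right (hg0 _ _) (one_le_omegaW ℓ q.1)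
  exact (h1.trans h2).trans_eq (integral_prod_symm _ hYω)

end GraphTrace

lemma integral_sq_le_of_cutoff {m : ℕ} {D : Set (Esp m)} (hD : IsOpen D)
    (hDb : Bornology.IsBounded D) {k h f : Esp m → ℝ} (hk : ContinuousOn k D)
    (hh : ContinuousOn h D) (hk0 : ∀ x ∈ D, 0 < k x) (hh0 : ∀ x ∈ D, 0 < h x)
    (hf : Measurable f) {F X : ℝ} (hF : ∀ᵐ x ∂(volume.restrict D), |f x| ≤ F)
    (hX : ∀ᶠ N in Filter.atTop, ∫ x in D, f x ^ 2 * (cutoff N (h x) * cutoff N (k x)) ≤ X) :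
    ∫ x in D, f x ^ 2 ≤ X := by
  have : IsFiniteMeasure (volume.restrict D) := ⟨by simpa using hDb.measure_lt_top⟩
  refine le_of_tendsto (tendsto_integral_filter_of_dominated_convergence (fun _ => F ^ 2)
    (Filter.Eventually.of_forall fun N => ?_) (Filter.Eventually.of_forall fun N => ?_)
    (integrable_const _) ?_) hX
  · have h1 : ContinuousOn (fun x => cutoff N (h x) * cutoff N (k x)) D :=
      ((contDiff_cutoff N).continuous.comp_continuousOn hh).mul
        ((contDiff_cutoff N).continuous.comp_continuousOn hk)
    exact (hf.pow_const 2).aestronglyMeasurable.mul (h1.aestronglyMeasurable hD.measurableSet)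
  · filter_upwards [hF] with x hx
    have h1 : f x ^ 2 ≤ F ^ 2 := by
      rw [← sq_abs]; exact pow_le_pow_left₀ (abs_nonneg _) hx 2
    have h2 := cutoff_nonneg N (h x)
    have h3 := cutoff_nonneg N (k x)
    have h4 : cutoff N (h x) * cutoff N (k x) ≤ 1 :=
      mul_le_one₀ (cutoff_le_one _ _) h3 (cutoff_le_one _ _)
    rw [Real.norm_of_nonneg (by positivity)]
    nlinarith [sq_nonneg (f x)]
  · filter_upwards [ae_restrict_mem hD.measurableSet] with x hx
    have key : ∀ r > 0, ∀ᶠ N in Filter.atTop, cutoff N r = 1 := fun r hr => by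
      filter_upwards [Filter.eventually_ge_atTop (2 / r), Filter.eventually_gt_atTop 0] with N h1 h2
      refine cutoff_eq_one h2 ?_
      rw [div_le_iff₀ hr] at h1
      rw [div_le_iff₀ h2]; linarith
    refine tendsto_const_nhds.congr' ?_
    filter_upwards [key _ (hk0 x hx), key _ (hh0 x hx)] with N h1 h2
    simp [h1, h2]

/-- The source factor of a transport equation is controlled by the trace of the solution on the
outflow graph. -/
lemma IsExitPair.integral_sq_le {d : ℕ} {ℓ ℓt : Esp d → ℝ} {ρ ρ₁ : ℝ}
    {H : Esp (d + 1) → Esp (d + 1)} {h : Esp (d + 1) → ℝ} {T δ B M Λ α M₀ F : ℝ}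
    (P : IsExitPair (graphDomain d ρ₁ ℓ ℓt) H (graphDepth ℓ) h T δ B) (hT : 0 < T) (hδ : 0 < δ)
    (hB : 0 < B) (hM : 0 < M) (hΛ : 0 ≤ Λ) (hα : 0 < α) (hM₀ : 0 < M₀)
    (hdiv : ∀ x ∈ graphDomain d ρ₁ ℓ ℓt, |divergence H x| ≤ Λ)
    (hρ : 0 < ρ) (hρ₁ : ρ₁ ≤ ρ) (hℓ : ContDiffOn ℝ 2 ℓ (closedBall 0 ρ))
    {K : Set (Esp (d + 1))} (hK : IsCompact K) (hDK : graphDomain d ρ₁ ℓ ℓt ⊆ K)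
    (hΓ : ∀ x' ∈ ball (0 : Esp d) ρ, graphMk d x' (ℓ x') ∈ K)
    {y v : Esp (d + 1) → ℝ → ℝ} {p f a : Esp (d + 1) → ℝ}
    (hy : ContDiffOn ℝ 1 (fun q : Esp (d + 1) × ℝ => y q.1 q.2) (K ×ˢ Icc 0 T))
    (hv : ContinuousOn (fun q : Esp (d + 1) × ℝ => v q.1 q.2) (K ×ˢ Icc 0 T))
    (heq : ∀ x ∈ graphDomain d ρ₁ ℓ ℓt, ∀ t ∈ Ioo 0 T,
      deriv (y x) t + fderiv ℝ (fun z => y z t) x (H x) + p x * y x t = f x * v x t)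
    (hy0 : ∀ x ∈ graphDomain d ρ₁ ℓ ℓt, y x 0 = f x * a x)
    (hp : ∀ᵐ x ∂(volume.restrict (graphDomain d ρ₁ ℓ ℓt)), |p x| ≤ M)
    (hfm : Measurable f) (hf : ∀ᵐ x ∂(volume.restrict (graphDomain d ρ₁ ℓ ℓt)), |f x| ≤ F)
    (ha : ∀ x ∈ graphDomain d ρ₁ ℓ ℓt, α ≤ a x ^ 2)
    (hvM : ∀ x ∈ graphDomain d ρ₁ ℓ ℓt, ∫ t in Ioo 0 T, v x t ^ 2 ≤ M₀ ^ 2) :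
    ∫ x in graphDomain d ρ₁ ℓ ℓt, f x ^ 2 ≤
      2 * B / α * Real.exp ((2 * M + Λ + 2 * M₀ ^ 2 / α) * T / 2) *
      ∫ t in Ioo 0 T, ∫ x' in ball (0 : Esp d) ρ,
        y (graphMk d x' (ℓ x')) t ^ 2 * omegaW d ℓ x' := by
  set D := graphDomain d ρ₁ ℓ ℓt with hD
  set C : ℝ := 2 * B / α * Real.exp ((2 * M + Λ + 2 * M₀ ^ 2 / α) * T / 2) with hC
  have C0 : 0 < C := by positivity
  have hΓ₁ : ∀ x' ∈ ball (0 : Esp d) ρ₁, graphMk d x' (ℓ x') ∈ K := fun x' hx' =>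
    hΓ x' (ball_subset_ball hρ₁ hx')
  have hℓ₁ : ContinuousOn ℓ (ball 0 ρ₁) :=
    hℓ.continuousOn.mono ((ball_subset_ball hρ₁).trans ball_subset_closedBall)
  have hg : ContinuousOn (fun q : Esp (d + 1) × ℝ => y q.1 q.2 ^ 2) (K ×ˢ Icc 0 T) :=
    hy.continuousOn.pow 2
  set π : Measure (Esp d × ℝ) :=
    (volume.restrict (ball 0 ρ₁)).prod (volume.restrict (Ioo 0 T)) with hπ
  have : IsFiniteMeasure (volume.restrict (ball (0 : Esp d) ρ₁)) :=
    ⟨by simpa using measure_ball_lt_top⟩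
  have hY : Integrable (fun q : Esp d × ℝ => y (graphMk d q.1 (ℓ q.1)) q.2 ^ 2) π :=
    integrable_graph_trace (g := fun x t => y x t ^ 2) hK hΓ₁ hℓ₁ hg
  have hlayer : ∀ e > 0, ∫ x in D, f x ^ 2 ≤
      C * (∫ q, y (graphMk d q.1 (ℓ q.1)) q.2 ^ 2 ∂π + π.real univ * e) := fun e he => by
    obtain ⟨N₀, hN₀, hlay⟩ := exists_boundaryLayer_le (g := fun x t => y x t ^ 2) hK hDK hΓ₁ hℓ₁ hg
      (fun x t => sq_nonneg _) h hY he
    refine integral_sq_le_of_cutoff P.isOpen (hK.isBounded.subset hDK)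
      P.contDiffOn_exit.continuousOn P.contDiffOn_entry.continuousOn P.exit_pos P.entry_pos hfm hf ?_
    filter_upwards [Filter.eventually_ge_atTop N₀] with N hN
    obtain ⟨hi, hle⟩ := P.energy_estimate hT hδ (hN₀.trans_le hN) hM hΛ hα hM₀ hdiv
      (hy.mono (prod_mono hDK le_rfl)) (hv.mono (prod_mono hDK le_rfl)) heq hy0 hp hfm hf ha hvM
    refine hle.trans (mul_le_mul_of_nonneg_left ((hlay N hN hi).trans_eq ?_) C0.le)
    rw [integral_add hY (integrable_const e), integral_const, smul_eq_mul]
  have hlim : ∫ x in D, f x ^ 2 ≤ C * ∫ q, y (graphMk d q.1 (ℓ q.1)) q.2 ^ 2 ∂π := by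
    have hcont : Continuous fun e : ℝ =>
      C * (∫ q, y (graphMk d q.1 (ℓ q.1)) q.2 ^ 2 ∂π + π.real univ * e) := by fun_prop
    have hten := (hcont.tendsto 0).mono_left (nhdsWithin_le_nhds (s := Ioi (0 : ℝ)))
    rw [mul_zero, add_zero] at hten
    refine ge_of_tendsto hten ?_
    filter_upwards [self_mem_nhdsWithin] with e he using hlayer e he
  exact hlim.trans (mul_le_mul_of_nonneg_left
    (integral_graph_trace_le (g := fun x t => y x t ^ 2) hK hρ hρ₁ hΓ hℓ
      (fun x t => sq_nonneg _) hg) C0.le)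

section Difference

variable {E : Type*} [NormedAddCommGroup E] [NormedSpace ℝ E]
  {u₁ u₂ : E → ℝ → ℝ} {A : Set E} {T : ℝ}

/-- The difference of the time derivatives of two solutions solves a transport equation whose
source is proportional to the difference of the potentials. -/
lemma transport_deriv_sub (hA : IsOpen A) (hT : 0 < T)
    (hu₁ : ContDiffOn ℝ 1 (fun q : E × ℝ => u₁ q.1 q.2) (A ×ˢ Icc 0 T))
    (hv₁ : ContDiffOn ℝ 1 (fun q : E × ℝ => deriv (u₁ q.1) q.2) (A ×ˢ Icc 0 T))
    (hu₂ : ContDiffOn ℝ 1 (fun q : E × ℝ => u₂ q.1 q.2) (A ×ˢ Icc 0 T))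
    (hv₂ : ContDiffOn ℝ 1 (fun q : E × ℝ => deriv (u₂ q.1) q.2) (A ×ˢ Icc 0 T))
    {x e : E} {p₁ p₂ : ℝ} (hx : x ∈ A)
    (heq₁ : ∀ t ∈ Ioo 0 T, deriv (u₁ x) t + fderiv ℝ (fun z => u₁ z t) x e + p₁ * u₁ x t = 0)
    (heq₂ : ∀ t ∈ Ioo 0 T, deriv (u₂ x) t + fderiv ℝ (fun z => u₂ z t) x e + p₂ * u₂ x t = 0)
    {t : ℝ} (ht : t ∈ Ioo 0 T) :
    deriv (fun s => deriv (u₁ x) s - deriv (u₂ x) s) t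
      + fderiv ℝ (fun z => deriv (u₁ z) t - deriv (u₂ z) t) x e
      + p₁ * (deriv (u₁ x) t - deriv (u₂ x) t) = (p₂ - p₁) * deriv (u₂ x) t := by
  have ht' := Ioo_subset_Icc_self ht
  rw [deriv_fun_sub (hasDerivAt_time (z := fun z => deriv (u₁ z)) hA hv₁ hx ht).differentiableAt
      (hasDerivAt_time (z := fun z => deriv (u₂ z)) hA hv₂ hx ht).differentiableAt,
    fderiv_fun_sub (hasFDerivAt_space (z := fun z => deriv (u₁ z)) hA hv₁ hx ht').differentiableAt
      (hasFDerivAt_space (z := fun z => deriv (u₂ z)) hA hv₂ hx ht').differentiableAt, sub_apply]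
  have h1 := transport_deriv hA hT hu₁ hv₁ hx heq₁ ht
  have h2 := transport_deriv hA hT hu₂ hv₂ hx heq₂ ht
  linear_combination h1 - h2

lemma transport_deriv_sub_initial (hA : IsOpen A) (hT : 0 < T)
    (hu₁ : ContDiffOn ℝ 1 (fun q : E × ℝ => u₁ q.1 q.2) (A ×ˢ Icc 0 T))
    (hv₁ : ContDiffOn ℝ 1 (fun q : E × ℝ => deriv (u₁ q.1) q.2) (A ×ˢ Icc 0 T))
    (hu₂ : ContDiffOn ℝ 1 (fun q : E × ℝ => u₂ q.1 q.2) (A ×ˢ Icc 0 T))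
    (hv₂ : ContDiffOn ℝ 1 (fun q : E × ℝ => deriv (u₂ q.1) q.2) (A ×ˢ Icc 0 T))
    {x e : E} {p₁ p₂ : ℝ} (hx : x ∈ A)
    (heq₁ : ∀ t ∈ Ioo 0 T, deriv (u₁ x) t + fderiv ℝ (fun z => u₁ z t) x e + p₁ * u₁ x t = 0)
    (heq₂ : ∀ t ∈ Ioo 0 T, deriv (u₂ x) t + fderiv ℝ (fun z => u₂ z t) x e + p₂ * u₂ x t = 0)
    {a : E → ℝ} (ha₁ : ∀ z ∈ A, u₁ z 0 = a z) (ha₂ : ∀ z ∈ A, u₂ z 0 = a z) :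
    deriv (u₁ x) 0 - deriv (u₂ x) 0 = (p₂ - p₁) * a x := by
  have h1 := transport_initial hA hT hu₁ hv₁ hx heq₁
  have h2 := transport_initial hA hT hu₂ hv₂ hx heq₂
  have h3 : (fun z => u₁ z 0) =ᶠ[nhds x] fun z => u₂ z 0 := by
    filter_upwards [hA.mem_nhds hx] with z hz
    rw [ha₁ z hz, ha₂ z hz]
  rw [h3.fderiv_eq, ha₁ x hx] at h1
  rw [ha₂ x hx] at h2
  linear_combination h1 - h2

end Difference

lemma inner_gradient_eq_fderiv {m : ℕ} (g : Esp m → ℝ) (x e : Esp m) :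
    ⟪e, gradient g x⟫ = fderiv ℝ g x e := by
  rw [real_inner_comm, gradient, InnerProductSpace.toDual_symm_apply]

/-- **Theorem 2** (local Hölder stability for the inverse zeroth-order
coefficient problem). -/
theorem theorem2_local_stability_inverse_potential
    (d : ℕ) (hd : 1 ≤ d) (T ρ₀ M δ₀ c : ℝ)
    (hT : 0 < T) (hρ₀ : 0 < ρ₀) (hM : 0 < M) (hδ₀ : 0 < δ₀) (hc : 0 < c)
    (ℓ : Esp d → ℝ) (hℓ : ContDiffOn ℝ 2 ℓ (closedBall 0 ρ₀)) (hℓ0 : ℓ 0 = 0)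
    (Ω : Set (Esp (d+1))) (hΩo : IsOpen Ω) (hΩb : Bornology.IsBounded Ω)
    (hΩsub : ∀ (x' : Esp d) (xn : ℝ), ‖x'‖ < ρ₀ → ℓ x' - c < xn → xn < ℓ x' →
      graphMk d x' xn ∈ Ω)
    (hΩdis : ∀ (x' : Esp d) (xn : ℝ), ‖x'‖ < ρ₀ → ℓ x' ≤ xn → xn < ℓ x' + c →
      graphMk d x' xn ∉ Ω)
    (H : Esp (d+1) → Esp (d+1))
    (hH : IsAdmissible M δ₀ (closure Ω) H) (hH0 : δ₀ < ⟪H 0, nuUp d ℓ 0⟫)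
    (a : Esp (d+1) → ℝ) (ha : ContDiffOn ℝ 1 a (closure Ω))
    (ha0 : ∀ x ∈ closure Ω, a x ≠ 0) :
    ∃ ρ₁ ∈ Set.Ioo 0 ρ₀, ∃ ℓt : Esp d → ℝ,
      ContDiffOn ℝ 2 ℓt (closedBall 0 ρ₁) ∧
      (∀ x' : Esp d, ‖x'‖ < ρ₁ → 0 < ℓt x') ∧
      (∀ x' : Esp d, ‖x'‖ = ρ₁ → ℓt x' = 0 ∧ gradient ℓt x' = 0) ∧
      graphDomain d ρ₁ ℓ ℓt ⊆ Ω ∧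
      (0 : Esp (d+1)) ∈ frontier (graphDomain d ρ₁ ℓ ℓt) ∩ frontier Ω ∧
      ∀ M₀ > (0:ℝ), ∃ C > (0:ℝ), ∃ θ ∈ Set.Ioo (0:ℝ) 1,
        ∀ p₁ p₂ : Esp (d+1) → ℝ,
          Measurable p₁ → (∀ᵐ x ∂(volume.restrict Ω), |p₁ x| ≤ M) →
          Measurable p₂ → (∀ᵐ x ∂(volume.restrict Ω), |p₂ x| ≤ M) →
          ∀ u₁ u₂ : Esp (d+1) → ℝ → ℝ,
          ((ContDiffOn ℝ 1 (fun q : Esp (d+1) × ℝ => u₁ q.1 q.2) (closure Ω ×ˢ Icc 0 T) ∧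
            ContDiffOn ℝ 1 (fun q : Esp (d+1) × ℝ => deriv (u₁ q.1) q.2)
              (closure Ω ×ˢ Icc 0 T) ∧
            (∀ x ∈ Ω, ∀ t ∈ Ioo 0 T,
              deriv (u₁ x) t + ⟪H x, gradient (fun z => u₁ z t) x⟫
                + p₁ x * u₁ x t = 0) ∧
            (∀ x ∈ Ω, u₁ x 0 = a x)) ∧
            (∫ t in Ioo 0 T,
              (⨆ x : graphDomain d ρ₁ ℓ ℓt, |deriv (u₁ (x : Esp (d+1))) t|) ^ 2)
              ≤ M₀ ^ 2) →
          ((ContDiffOn ℝ 1 (fun q : Esp (d+1) × ℝ => u₂ q.1 q.2) (closure Ω ×ˢ Icc 0 T) ∧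
            ContDiffOn ℝ 1 (fun q : Esp (d+1) × ℝ => deriv (u₂ q.1) q.2)
              (closure Ω ×ˢ Icc 0 T) ∧
            (∀ x ∈ Ω, ∀ t ∈ Ioo 0 T,
              deriv (u₂ x) t + ⟪H x, gradient (fun z => u₂ z t) x⟫
                + p₂ x * u₂ x t = 0) ∧
            (∀ x ∈ Ω, u₂ x 0 = a x)) ∧
            (∫ t in Ioo 0 T,
              (⨆ x : graphDomain d ρ₁ ℓ ℓt, |deriv (u₂ (x : Esp (d+1))) t|) ^ 2)
              ≤ M₀ ^ 2) →
          Real.sqrt (∫ x in graphDomain d ρ₁ ℓ ℓt, (p₁ x - p₂ x) ^ 2) ≤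
            C * ((Real.sqrt (∫ t in Ioo 0 T, ∫ x' in ball (0 : Esp d) ρ₀,
                (deriv (u₁  (graphMk d x' (ℓ x'))) t
                  - deriv (u₂  (graphMk d x' (ℓ x'))) t) ^ 2
                  * omegaW d ℓ x')) ^ θ
              + Real.sqrt (∫ t in Ioo 0 T, ∫ x' in ball (0 : Esp d) ρ₀,
                (deriv (u₁  (graphMk d x' (ℓ x'))) t
                  - deriv (u₂  (graphMk d x' (ℓ x'))) t) ^ 2
                  * omegaW d ℓ x')) := by
  obtain ⟨U, hUo, -, hΩU, hHU, hHM, hDHM, -⟩ := hH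
  have hK : IsCompact (closure Ω) := hΩb.isCompact_closure
  have hΓ : ∀ x' ∈ ball (0 : Esp d) ρ₀, graphMk d x' (ℓ x') ∈ closure Ω := fun x' hx' =>
    graphMk_mem_closure hc fun s hs => hΩsub x' _ (by simpa using hx') (by linarith [hs.2])
      (by linarith [hs.1])
  have h0Ω : (0 : Esp (d + 1)) ∈ closure Ω := by
    simpa only [hℓ0, graphMk_zero] using hΓ 0 (mem_ball_self hρ₀)
  obtain ⟨ρ₁, hρ₁, ε, ε0, εc, ρ₁1, B, hB, -, P⟩ :=
    exists_isExitPair hT hρ₀ hM hδ₀ hc hℓ hℓ0 hUo (hΩU h0Ω) hHU hHM hH0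
  set D := graphDomain d ρ₁ ℓ (bump ε ρ₁) with hD
  have hDΩ : D ⊆ Ω := fun x hx => by
    obtain ⟨h1, h2, h3⟩ := mem_graphDomain.1 hx
    rw [← graphMk_horizontal_vertical x]
    exact hΩsub _ _ (h1.trans hρ₁.2) (by linarith [bump_le ε0 ρ₁1 h1]) h3
  have hDK : D ⊆ closure Ω := hDΩ.trans subset_closure
  refine ⟨ρ₁, hρ₁, bump ε ρ₁, (contDiff_bump ε ρ₁).contDiffOn, fun x' hx' => bump_pos ε0 hx',
    fun x' hx' => bump_boundary ε hx', hDΩ, ⟨?_, ?_⟩, fun M₀ hM₀ => ?_⟩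
  · refine ⟨?_, fun h => ?_⟩
    · have h1 := graphMk_mem_closure (ℓ := ℓ) (x' := 0) (S := D)
        (bump_pos ε0 (x' := 0) (by simpa using hρ₁.1)) fun s hs => by
          rw [hD, mem_graphDomain]
          simpa using ⟨hρ₁.1, hs.2, hs.1⟩
      simpa only [hℓ0, graphMk_zero] using h1
    · have := P.exit_pos 0 (interior_subset h)
      simp [graphDepth, hℓ0] at this
  · refine ⟨h0Ω, fun h => hΩdis 0 0 (by simpa using hρ₀) hℓ0.le (by linarith) ?_⟩
    rw [graphMk_zero]
    exact interior_subset h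
  obtain ⟨x₀, hx₀, hmin⟩ := hK.exists_isMinOn ⟨0, h0Ω⟩ (ha.continuousOn.pow 2)
  set α : ℝ := a x₀ ^ 2 with hα
  have α0 : 0 < α := by have := ha0 x₀ hx₀; positivity
  set Λ : ℝ := (d + 1 : ℕ) * M with hΛ
  set C : ℝ := 2 * B / α * Real.exp ((2 * M + Λ + 2 * M₀ ^ 2 / α) * T / 2) with hC
  have C0 : 0 < C := by positivity
  refine ⟨Real.sqrt C, Real.sqrt_pos.2 C0, 1 / 2, by norm_num, ?_⟩
  rintro p₁ p₂ hp₁m hp₁ hp₂m hp₂ u₁ u₂ ⟨⟨hu₁, hv₁, heq₁, hi₁⟩, -⟩ ⟨⟨hu₂, hv₂, heq₂, hi₂⟩, hs₂⟩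
  simp only [inner_gradient_eq_fderiv] at heq₁ heq₂
  have hsub : (Ω ×ˢ Icc 0 T : Set (Esp (d + 1) × ℝ)) ⊆ closure Ω ×ˢ Icc 0 T :=
    prod_mono subset_closure le_rfl
  have hmain := P.integral_sq_le hT hδ₀ hB hM (by positivity : 0 ≤ Λ) α0 hM₀
    (fun x hx => abs_divergence_le (hDHM x (hΩU (hDK hx)))) hρ₀ hρ₁.2.le hℓ hK hDK hΓ
    (y := fun x t => deriv (u₁ x) t - deriv (u₂ x) t) (v := fun x => deriv (u₂ x))
    (p := p₁) (f := fun x => p₂ x - p₁ x) (a := a) (F := M + M) (hv₁.sub hv₂) hv₂.continuousOn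
    (fun x hx t ht => transport_deriv_sub hΩo hT (hu₁.mono hsub) (hv₁.mono hsub) (hu₂.mono hsub)
      (hv₂.mono hsub) (hDΩ hx) (heq₁ x (hDΩ hx)) (heq₂ x (hDΩ hx)) ht)
    (fun x hx => transport_deriv_sub_initial hΩo hT (hu₁.mono hsub) (hv₁.mono hsub)
      (hu₂.mono hsub) (hv₂.mono hsub) (hDΩ hx) (heq₁ x (hDΩ hx)) (heq₂ x (hDΩ hx)) hi₁ hi₂)
    (ae_restrict_of_ae_restrict_of_subset hDΩ hp₁) (hp₂m.sub hp₁m)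
    (by
      filter_upwards [ae_restrict_of_ae_restrict_of_subset hDΩ hp₁,
        ae_restrict_of_ae_restrict_of_subset hDΩ hp₂] with x h1 h2
      exact (abs_sub _ _).trans (add_le_add h2 h1))
    (fun x hx => hmin (hDK hx))
    (fun x hx => (setIntegral_sq_le_of_iSup (v := fun x => deriv (u₂ x)) hK hDK
      hv₂.continuousOn hx).trans hs₂)
  simp only [fun x => sub_sq_comm (p₂ x) (p₁ x)] at hmain
  have hsqrt := Real.sqrt_le_sqrt hmain
  rw [Real.sqrt_mul C0.le] at hsqrt
  refine hsqrt.trans (mul_le_mul_of_nonneg_left (le_add_of_nonneg_left ?_) (Real.sqrt_nonneg _))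
  positivity
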